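/- Let M, M' ∈ M_r(ℤ) be symmetric, even, hyperbolic, 2-elementary Gram matrices of the same length a and with δ(M) = δ(M'). Then M and M' are ℤ-congruent, i.e. there exists P ∈ GL_r(ℤ) with PᵀMP = M'. -/

import Mathlib

open Matrix

/-- `M` is the Gram matrix of a hyperbolic lattice, i.e. of signature `(1, r-1)`: over `ℝ`
it is congruent to `diag(1, -1, …, -1)`. -/
def IsHyperbolicGram {r : ℕ} (M : Matrix (Fin r) (Fin r) ℤ) : Prop :=
  ∃ P : Matrix (Fin r) (Fin r) ℝ, IsUnit P.det ∧
    Pᵀ * (M.map (Int.cast : ℤ → ℝ)) * P =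
      Matrix.diagonal (fun i : Fin r => if (i : ℕ) = 0 then (1 : ℝ) else -1)

/-- `M` is `q`-elementary of length `a`: the cokernel of `M : ℤ^r → ℤ^r` is isomorphic to
`(ℤ/qℤ)^a`. -/
def ElemOfLength {r : ℕ} (q a : ℕ) (M : Matrix (Fin r) (Fin r) ℤ) : Prop :=
  Nonempty (((Fin r → ℤ) ⧸ LinearMap.range M.mulVecLin) ≃ₗ[ℤ] (Fin a → ZMod q))

/-- `δ(M) = 0`, i.e. `zᵀ M⁻¹ z ∈ ℤ` for every integer vector `z`. -/
def DeltaZero {r : ℕ} (M : Matrix (Fin r) (Fin r) ℤ) : Prop :=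
  ∀ z : Fin r → ℤ, ∃ n : ℤ,
    (fun i => (z i : ℚ)) ⬝ᵥ ((M.map (Int.cast : ℤ → ℚ))⁻¹ *ᵥ fun i => (z i : ℚ)) = (n : ℚ)

/-! Isotropy comes from the Witt group in place of Meyer's theorem. Filtering the Witt group of `ℚ`
by primes, with Tate's residue symbols as graded pieces, shows that a rational form containing a
self-dual lattice is Witt equivalent to copies of `⟨1⟩` or of `⟨-1⟩`, as many as its signature says.
An indefinite such form is therefore isotropic, so the odd unimodular Lorentzian lattice of each
rank is unique.

Unless all norms of a Lorentzian even 2-elementary lattice `L` are divisible by four, `L(2)` embeds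
into this odd lattice `I` with image `Λ ⊇ 2I`, and `Λ` is Construction A of the doubly even code
`Λ / 2I`. Here `δ = 0` exactly when `Λ` contains the characteristic vector `1`. Reflections in
vectors of norm `-2` act on `I / 2I` as transvections, and these move one code into another as soon
as the two agree on containing `1`; equality of determinants turns the inclusion into an equality.
In the excluded case half the form is even unimodular, and its norms are not all divisible by
four. -/

open LinearMap (BilinForm)
open scoped TensorProduct nonZeroDivisors

universe u

/-! ### Diagonal forms and the Witt group -/

section Diagonalization

variable {K V : Type u} [Field K] [AddCommGroup V] [Module K V] {B : BilinForm K V}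

/-- The subspace `U`, equipped with the restriction of `B`, is isometric to the diagonal form with
nonzero entries `s`: it is spanned by pairwise orthogonal vectors with norms `s`. Orthogonality is
only recorded in one direction, so `B` is meant to be symmetric. -/
inductive IsDiagonalOn (B : BilinForm K V) : Multiset Kˣ → Submodule K V → Prop
  | zero : IsDiagonalOn B 0 ⊥
  | cons {s : Multiset Kˣ} {U : Submodule K V} {x : V} {a : Kˣ} (hx : B x x = a)
      (hxU : ∀ y ∈ U, B x y = 0) (hU : IsDiagonalOn B s U) :
      IsDiagonalOn B (a ::ₘ s) (Submodule.span K {x} ⊔ U)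

namespace IsDiagonalOn

theorem zero_iff {U : Submodule K V} : IsDiagonalOn B 0 U ↔ U = ⊥ := by
  constructor
  · generalize hs : (0 : Multiset Kˣ) = s
    rintro (_ | _)
    · rfl
    · simp at hs
  · rintro rfl
    exact zero

theorem add {s t : Multiset Kˣ} {U W : Submodule K V} (hU : IsDiagonalOn B s U)
    (hW : IsDiagonalOn B t W) (hUW : ∀ x ∈ U, ∀ y ∈ W, B x y = 0) :
    IsDiagonalOn B (s + t) (U ⊔ W) := by
  induction hU with
  | zero => simpa using hW
  | @cons s U x a hx hxU _ ih =>
    rw [Multiset.cons_add, sup_assoc]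
    refine cons hx (fun y hy => ?_) (ih fun y hy => hUW y (Submodule.mem_sup_right hy))
    obtain ⟨y₁, h₁, y₂, h₂, rfl⟩ := Submodule.mem_sup.1 hy
    rw [map_add, hxU y₁ h₁, zero_add]
    exact hUW x (Submodule.mem_sup_left (Submodule.mem_span_singleton_self x)) y₂ h₂

theorem exists_of_add (hB : B.IsSymm) {s t : Multiset Kˣ} {U : Submodule K V}
    (h : IsDiagonalOn B (s + t) U) : ∃ U₁ U₂ : Submodule K V, U₁ ⊔ U₂ = U ∧
      (∀ x ∈ U₁, ∀ y ∈ U₂, B x y = 0) ∧ IsDiagonalOn B s U₁ ∧ IsDiagonalOn B t U₂ := by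
  generalize hst : s + t = w at h
  induction h generalizing s t with
  | zero =>
    obtain ⟨rfl, rfl⟩ := add_eq_zero.1 hst
    exact ⟨⊥, ⊥, by simp, by simp, zero, zero⟩
  | @cons w U x a hx hxU _ ih =>
    have ha : a ∈ s + t := hst ▸ Multiset.mem_cons_self a w
    rcases Multiset.mem_add.1 ha with ha | ha
    · obtain ⟨s', rfl⟩ := Multiset.exists_cons_of_mem ha
      rw [Multiset.cons_add, Multiset.cons_inj_right] at hst
      obtain ⟨U₁, U₂, rfl, horth, h₁, h₂⟩ := ih hst
      refine ⟨_, U₂, sup_assoc _ _ _, ?_,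
        cons hx (fun y hy => hxU y (Submodule.mem_sup_left hy)) h₁, h₂⟩
      intro y hy z hz
      obtain ⟨y₁, hy₁, y₂, hy₂, rfl⟩ := Submodule.mem_sup.1 hy
      obtain ⟨c, rfl⟩ := Submodule.mem_span_singleton.1 hy₁
      simp [hxU z (Submodule.mem_sup_right hz), horth y₂ hy₂ z hz]
    · obtain ⟨t', rfl⟩ := Multiset.exists_cons_of_mem ha
      rw [Multiset.add_cons, Multiset.cons_inj_right] at hst
      obtain ⟨U₁, U₂, rfl, horth, h₁, h₂⟩ := ih hst
      refine ⟨U₁, _, by rw [sup_left_comm], ?_, h₁,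
        cons hx (fun y hy => hxU y (Submodule.mem_sup_right hy)) h₂⟩
      intro y hy z hz
      obtain ⟨z₁, hz₁, z₂, hz₂, rfl⟩ := Submodule.mem_sup.1 hz
      obtain ⟨c, rfl⟩ := Submodule.mem_span_singleton.1 hz₁
      simp [hB.eq y x ▸ hxU y (Submodule.mem_sup_left hy), horth y hy z₂ hz₂]

theorem add_iff (hB : B.IsSymm) {s t : Multiset Kˣ} {U : Submodule K V} :
    IsDiagonalOn B (s + t) U ↔ ∃ U₁ U₂ : Submodule K V, U₁ ⊔ U₂ = U ∧
      (∀ x ∈ U₁, ∀ y ∈ U₂, B x y = 0) ∧ IsDiagonalOn B s U₁ ∧ IsDiagonalOn B t U₂ := by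
  refine ⟨exists_of_add hB, ?_⟩
  rintro ⟨U₁, U₂, rfl, horth, h₁, h₂⟩
  exact h₁.add h₂ horth

theorem singleton_iff {a : Kˣ} {U : Submodule K V} :
    IsDiagonalOn B {a} U ↔ ∃ x, B x x = a ∧ Submodule.span K {x} = U := by
  constructor
  · generalize hs : ({a} : Multiset Kˣ) = s
    rintro (_ | ⟨hx, -, hU⟩)
    · simp at hs
    · obtain ⟨rfl, rfl⟩ := Multiset.cons_eq_cons.1 hs |>.resolve_right (by simp)
      rw [zero_iff.1 hU, sup_bot_eq]
      exact ⟨_, hx, rfl⟩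
  · rintro ⟨x, hx, rfl⟩
    simpa using cons hx (by simp) (zero (B := B))

theorem pair_iff (hB : B.IsSymm) {a b : Kˣ} {U : Submodule K V} :
    IsDiagonalOn B {a, b} U ↔
      ∃ x y, B x x = a ∧ B y y = b ∧ B x y = 0 ∧ Submodule.span K {x, y} = U := by
  rw [Multiset.insert_eq_cons, ← Multiset.singleton_add, add_iff hB]
  simp only [singleton_iff]
  constructor
  · rintro ⟨_, _, rfl, horth, ⟨x, hx, rfl⟩, y, hy, rfl⟩
    exact ⟨x, y, hx, hy, horth x (Submodule.mem_span_singleton_self x) y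
      (Submodule.mem_span_singleton_self y), Submodule.span_insert x {y}⟩
  · rintro ⟨x, y, hx, hy, hxy, rfl⟩
    refine ⟨_, _, (Submodule.span_insert x {y}).symm, fun v hv w hw => ?_,
      ⟨x, hx, rfl⟩, y, hy, rfl⟩
    obtain ⟨c, rfl⟩ := Submodule.mem_span_singleton.1 hv
    obtain ⟨d, rfl⟩ := Submodule.mem_span_singleton.1 hw
    simp [hxy]

theorem finrank_eq_card {s : Multiset Kˣ} {U : Submodule K V} (h : IsDiagonalOn B s U) :
    Module.finrank K U = s.card ∧ FiniteDimensional K U := by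
  induction h with
  | zero => exact ⟨by simp, inferInstance⟩
  | @cons s U x a hx hxU _ ih =>
    obtain ⟨ih, _⟩ := ih
    have hx0 : x ≠ 0 := by
      rintro rfl
      exact a.ne_zero (by simpa using hx.symm)
    have hdisj : Submodule.span K {x} ⊓ U = ⊥ := by
      rw [← disjoint_iff, disjoint_comm, Submodule.disjoint_span_singleton' hx0]
      exact fun hxU' => a.ne_zero (hx ▸ hxU x hxU')
    refine ⟨?_, inferInstance⟩
    have hsum := Submodule.finrank_sup_add_finrank_inf_eq (Submodule.span K {x}) U
    rw [hdisj, finrank_bot, finrank_span_singleton hx0, ih] at hsum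
    rw [Multiset.card_cons]
    lia

theorem eq_zero_of_forall (hB : B.IsSymm) {s : Multiset Kˣ} {U : Submodule K V}
    (h : IsDiagonalOn B s U) {x : V} (hx : x ∈ U) (hxU : ∀ y ∈ U, B x y = 0) : x = 0 := by
  induction h generalizing x with
  | zero => simpa using hx
  | @cons _ U w a hw hwU _ ih =>
    obtain ⟨w', hw', y, hy, rfl⟩ := Submodule.mem_sup.1 hx
    obtain ⟨c, rfl⟩ := Submodule.mem_span_singleton.1 hw'
    have hc : c = 0 := by
      simpa [hw, hB.eq y w ▸ hwU y hy] using
        hxU w (Submodule.mem_sup_left (Submodule.mem_span_singleton_self w))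
    subst hc
    rw [zero_smul, zero_add] at hxU ⊢
    exact ih hy fun z hz => hxU z (Submodule.mem_sup_right hz)

theorem nondegenerate (hB : B.IsSymm) {s : Multiset Kˣ} (h : IsDiagonalOn B s ⊤) :
    B.Nondegenerate :=
  (LinearMap.IsRefl.nondegenerate_iff_separatingLeft hB.isRefl).2 fun _ hx =>
    h.eq_zero_of_forall hB Submodule.mem_top fun y _ => hx y

theorem exists_family (hB : B.IsSymm) {α : Type*} {f : α → K} {A : Multiset α} {s : Multiset Kˣ}
    {U : Submodule K V} (h : IsDiagonalOn B s U) (hs : s.map Units.val = A.map f) :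
    ∃ (ι : Type) (_ : Fintype ι) (v : ι → V) (c : ι → α), Finset.univ.val.map c = A ∧
      (∀ i, B (v i) (v i) = f (c i)) ∧ (∀ i j, i ≠ j → B (v i) (v j) = 0) ∧
      Submodule.span K (Set.range v) = U := by
  classical
  induction h generalizing A with
  | zero =>
    obtain rfl : A = 0 := by simpa using hs.symm
    exact ⟨Empty, inferInstance, Empty.elim, Empty.elim, by simp, by simp, by simp, by simp⟩
  | @cons s U x a hx hxU _ ih =>
    rw [Multiset.map_cons, eq_comm, ← Multiset.map_eq_cons] at hs
    obtain ⟨α₀, hα₀, hfa, hs⟩ := hs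
    obtain ⟨ι, _, v, c, hcA, hv, horth, hspan⟩ := ih hs.symm
    have hxv (i : ι) : B x (v i) = 0 := hxU _ (hspan ▸ Submodule.subset_span ⟨i, rfl⟩)
    refine ⟨Option ι, inferInstance, (Option.elim · x v), (Option.elim · α₀ c), ?_, ?_, ?_, ?_⟩
    · rw [← Multiset.cons_erase hα₀, ← hcA]
      simp [univ_option, Finset.insertNone, Function.comp_def]
    · rintro (_ | i)
      exacts [hx.trans hfa.symm, hv i]
    · rintro (_ | i) (_ | j) hij
      exacts [(hij rfl).elim, hxv j, (hB.eq _ _).trans (hxv i),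
        horth i j fun h => hij (h ▸ rfl)]
    · rw [← hspan, ← Submodule.span_insert, Option.range_eq]
      rfl

end IsDiagonalOn

end Diagonalization

section WittGroup

variable (K : Type u) [Field K]

/-- Isometry of diagonal forms, expressed without choosing a model: `s` and `t` are congruent if
every subspace of a symmetric bilinear space that has a diagonalization `s` also has a
diagonalization `t`, and conversely. -/
def isometryCon : AddCon (Multiset Kˣ) where
  r s t := ∀ (V : Type u) [AddCommGroup V] [Module K V] (B : BilinForm K V), B.IsSymm →
    ∀ U : Submodule K V, IsDiagonalOn B s U ↔ IsDiagonalOn B t U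
  iseqv :=
    { refl _ _ _ _ _ _ _ := Iff.rfl
      symm h V _ _ B hB U := (h V B hB U).symm
      trans h h' V _ _ B hB U := (h V B hB U).trans (h' V B hB U) }
  add' h h' V _ _ B hB U := by
    simp only [IsDiagonalOn.add_iff hB, h V B hB, h' V B hB]

/-- The diagonal form `⟨1, -1⟩`, a hyperbolic plane. -/
def hyperbolicPlane : Multiset Kˣ := {1, -1}

variable {K}

theorem isometryCon_mul_sq (a c : Kˣ) : isometryCon K {a * c ^ 2} {a} := by
  have key (a c : Kˣ) {V : Type u} [AddCommGroup V] [Module K V] {B : BilinForm K V}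
      {U : Submodule K V} (h : IsDiagonalOn B {a} U) : IsDiagonalOn B {a * c ^ 2} U := by
    obtain ⟨x, hx, rfl⟩ := IsDiagonalOn.singleton_iff.1 h
    refine IsDiagonalOn.singleton_iff.2
      ⟨(c : K) • x, ?_, Submodule.span_singleton_smul_eq c.isUnit x⟩
    simp [hx]
    ring
  refine fun V _ _ B _ U => ⟨fun h => ?_, key a c⟩
  simpa [mul_assoc, ← mul_pow] using key _ c⁻¹ h

theorem IsDiagonalOn.of_represents {V : Type u} [AddCommGroup V] [Module K V] {B : BilinForm K V}
    (hB : B.IsSymm) {U : Submodule K V} {a b c : Kˣ} {p q : K} (hc : a * p ^ 2 + b * q ^ 2 = c)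
    (h : IsDiagonalOn B {a, b} U) : IsDiagonalOn B {c, a * b * c} U := by
  obtain ⟨x, y, hx, hy, hxy, rfl⟩ := (IsDiagonalOn.pair_iff hB).1 h
  have hyx : B y x = 0 := (hB.eq x y).symm.trans hxy
  refine (IsDiagonalOn.pair_iff hB).2
    ⟨p • x + q • y, (-(b * q)) • x + (a * p) • y, ?_, ?_, ?_, le_antisymm ?_ ?_⟩
  · simp [hx, hy, hxy, hyx, ← hc]
    ring
  · simp [hx, hy, hxy, hyx, ← hc]
    ring
  · simp [hx, hy, hxy, hyx]
    ring
  · simp only [Submodule.span_le, Set.pair_subset_iff, SetLike.mem_coe, Submodule.mem_span_pair]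
    exact ⟨⟨_, _, rfl⟩, _, _, rfl⟩
  · simp only [Submodule.span_le, Set.pair_subset_iff, SetLike.mem_coe, Submodule.mem_span_pair]
    refine ⟨⟨p * a / c, -q / c, ?_⟩, b * q / c, p / c, ?_⟩
    · match_scalars <;> field_simp <;> grind
    · match_scalars <;> field_simp <;> grind

theorem isometryCon_of_represents {a b c : Kˣ} {p q : K} (hc : a * p ^ 2 + b * q ^ 2 = c) :
    isometryCon K {a, b} {c, a * b * c} := by
  refine fun V _ _ B hB U => ⟨IsDiagonalOn.of_represents hB hc, fun h => ?_⟩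
  have ha : (c : K) * (a * p / c) ^ 2 + (a * b * c : Kˣ) * (q / c) ^ 2 = a := by
    push_cast
    field_simp
    linear_combination hc
  have h' := h.of_represents hB ha
  have hb : c * (a * b * c) * a = b * (a * c) ^ 2 := by
    rw [Units.ext_iff]
    push_cast
    ring
  rw [hb] at h'
  exact ((isometryCon K).add ((isometryCon K).refl {a}) (isometryCon_mul_sq b (a * c)) V B hB U).1
    h'

theorem isometryCon_hyperbolicPlane (h2 : (2 : K) ≠ 0) (a : Kˣ) :
    isometryCon K {a, -a} (hyperbolicPlane K) := by
  have h1 : (a : K) * ((a + 1) / (2 * a)) ^ 2 + (-a : Kˣ) * ((a - 1) / (2 * a)) ^ 2 = (1 : Kˣ) := by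
    push_cast
    field_simp
    ring
  have hsq : a * -a * 1 = -1 * a ^ 2 := by simp [sq]
  have key := isometryCon_of_represents h1
  rw [hsq] at key
  exact (isometryCon K).trans key
    ((isometryCon K).add ((isometryCon K).refl {1}) (isometryCon_mul_sq (-1) a))

variable (K) in
/-- Witt equivalence of diagonal forms: isometry after adding hyperbolic planes. -/
def wittCon : AddCon (Multiset Kˣ) where
  r s t := ∃ m n : ℕ, isometryCon K (s + m • hyperbolicPlane K) (t + n • hyperbolicPlane K)
  iseqv :=
    { refl s := ⟨0, 0, (isometryCon K).refl _⟩
      symm := fun ⟨m, n, h⟩ => ⟨n, m, (isometryCon K).symm h⟩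
      trans := by
        rintro s t w ⟨m, n, h⟩ ⟨m', n', h'⟩
        refine ⟨m + m', n + n', ?_⟩
        have e := (isometryCon K).add h ((isometryCon K).refl (m' • hyperbolicPlane K))
        have e' := (isometryCon K).add h' ((isometryCon K).refl (n • hyperbolicPlane K))
        rw [add_right_comm t] at e
        simpa only [add_smul, add_assoc, add_comm (n • hyperbolicPlane K)] using
          (isometryCon K).trans e e' }
  add' := by
    rintro s t s' t' ⟨m, n, h⟩ ⟨m', n', h'⟩
    refine ⟨m + m', n + n', ?_⟩
    simpa only [add_smul, add_add_add_comm] using (isometryCon K).add h h'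

end WittGroup

section WittSymbol

variable {K A : Type*} [Field K] [AddCommGroup A]

/-- A function on a field satisfying the relations between the classes of the forms `⟨a⟩` in the
Witt group; it amounts to a homomorphism out of the Witt group. The value at `0` is arbitrary up to
what `map_neg` forces. -/
structure IsWittSymbol (ψ : K → A) : Prop where
  map_neg (a : K) : ψ (-a) = -ψ a
  map_mul_sq (a : K) {c : K} (hc : c ≠ 0) : ψ (a * c ^ 2) = ψ a
  map_add (a b : K) : ψ a + ψ b = ψ (a + b) + ψ (a * b * (a + b))

variable {ψ : K → A}

theorem IsWittSymbol.prodMk {A' : Type*} [AddCommGroup A'] {ψ' : K → A'} (hψ : IsWittSymbol ψ)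
    (hψ' : IsWittSymbol ψ') : IsWittSymbol fun a => (ψ a, ψ' a) where
  map_neg a := Prod.ext (hψ.map_neg a) (hψ'.map_neg a)
  map_mul_sq a _ hc := Prod.ext (hψ.map_mul_sq a hc) (hψ'.map_mul_sq a hc)
  map_add a b := Prod.ext (hψ.map_add a b) (hψ'.map_add a b)

theorem isWittSymbol_sign [LinearOrder K] [IsStrictOrderedRing K] :
    IsWittSymbol fun a : K => (SignType.sign a : ℤ) where
  map_neg a := by simp [Left.sign_neg]
  map_mul_sq a c hc := by simp [sign_mul, sign_pos (pow_two_pos_of_ne_zero hc)]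
  map_add a b := by
    simp only [sign_mul]
    rcases lt_trichotomy a 0 with ha | rfl | ha <;> rcases lt_trichotomy b 0 with hb | rfl | hb
    · simp [sign_neg, ha, hb, add_neg ha hb]
    · simp
    · rcases lt_trichotomy (a + b) 0 with hab | hab | hab <;>
        simp [sign_neg, sign_pos, ha, hb, hab]
    · simp
    · simp
    · simp
    · rcases lt_trichotomy (a + b) 0 with hab | hab | hab <;>
        simp [sign_neg, sign_pos, ha, hb, hab]
    · simp
    · simp [sign_pos, ha, hb, add_pos ha hb]

/-- The diagonal form with the given coefficients has a nontrivial zero. Each pair in `l` consists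
of a coefficient and the corresponding coordinate of the zero. -/
def IsIsotropicDiag (us : Multiset K) : Prop :=
  ∃ l : Multiset (K × K), l.map Prod.fst = us ∧ (l.map fun a => a.1 * a.2 ^ 2).sum = 0 ∧
    ∃ a ∈ l, a.2 ≠ 0

namespace IsWittSymbol

/-- A nonzero value represented by a diagonal form can be split off. -/
theorem exists_sum_eq_add (hψ : IsWittSymbol ψ) (l : Multiset (K × K)) (hl : ∀ a ∈ l, a.1 ≠ 0)
    {v : K} (hv : v ≠ 0) (h : (l.map fun a => a.1 * a.2 ^ 2).sum = v) :
    ∃ ws : Multiset K, (∀ w ∈ ws, w ≠ 0) ∧ ws.card + 1 = l.card ∧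
      (l.map fun a => ψ a.1).sum = ψ v + (ws.map ψ).sum := by
  induction l using Multiset.induction_on generalizing v with
  | empty => exact absurd h.symm hv
  | cons a l ih =>
    obtain ⟨a, x⟩ := a
    simp only [Multiset.mem_cons, forall_eq_or_imp] at hl
    simp only [Multiset.map_cons, Multiset.sum_cons] at h ⊢
    obtain ⟨ha, hl⟩ := hl
    by_cases hx : x = 0
    · obtain ⟨ws, hws, hcard, hsum⟩ := ih hl hv (by simpa [hx] using h)
      refine ⟨a ::ₘ ws, by simpa using ⟨ha, hws⟩, by simp [hcard], ?_⟩
      rw [hsum, Multiset.map_cons, Multiset.sum_cons, add_left_comm]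
    rw [← hψ.map_mul_sq a hx]
    generalize ht' : (l.map fun a => a.1 * a.2 ^ 2).sum = t at h
    by_cases ht : t = 0
    · refine ⟨l.map Prod.fst, by simpa using fun w b hb => hl _ hb, by simp, ?_⟩
      rw [← h, ht, add_zero, Multiset.map_map]
      rfl
    · obtain ⟨ws, hws, hcard, hsum⟩ := ih hl ht ht'
      refine ⟨a * x ^ 2 * t * v ::ₘ ws, by simpa [ha, hx, ht, hv] using hws, by simp [hcard], ?_⟩
      rw [hsum, ← add_assoc, hψ.map_add, h, Multiset.map_cons, Multiset.sum_cons, add_assoc]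

theorem exists_shorter_sum_eq (hψ : IsWittSymbol ψ) {us : Multiset K} (hus : ∀ u ∈ us, u ≠ 0)
    (h : IsIsotropicDiag us) : ∃ ws : Multiset K, (∀ w ∈ ws, w ≠ 0) ∧ ws.card < us.card ∧
      (us.map ψ).sum = (ws.map ψ).sum := by
  obtain ⟨l, rfl, hsum, ⟨a, x⟩, hax, hx⟩ := h
  obtain ⟨l, rfl⟩ := Multiset.exists_cons_of_mem hax
  simp only [Multiset.map_cons, Multiset.sum_cons, Multiset.mem_cons, forall_eq_or_imp,
    Multiset.card_cons, Multiset.card_map] at hsum hus ⊢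
  obtain ⟨ws, hws, hcard, hws_sum⟩ := hψ.exists_sum_eq_add l
    (fun b hb => hus.2 _ (Multiset.mem_map_of_mem _ hb))
    (neg_ne_zero.2 (mul_ne_zero hus.1 (pow_ne_zero 2 hx))) (eq_neg_of_add_eq_zero_right hsum)
  refine ⟨ws, hws, by lia, ?_⟩
  rw [Multiset.map_map, Function.comp_def, hws_sum, hψ.map_neg, hψ.map_mul_sq a hx,
    add_neg_cancel_left]

end IsWittSymbol

end WittSymbol

section WittClass

variable (K : Type u) [Field K]

/-- The Witt group of `K`, presented by the diagonal forms. -/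
abbrev WittGroup : Type u := (wittCon K).Quotient

variable {K}

/-- The Witt class of a diagonal form. -/
def wittMk : Multiset Kˣ →+ WittGroup K := (wittCon K).mk'

theorem wittMk_eq_of_isometryCon {s t : Multiset Kˣ} (h : isometryCon K s t) :
    wittMk s = wittMk t :=
  (AddCon.eq _).2 ⟨0, 0, by simpa using h⟩

open Classical in
/-- The Witt class of the form `⟨a⟩`, with value `0` at `a = 0`. -/
noncomputable def wittClass (a : K) : WittGroup K :=
  if h : a = 0 then 0 else wittMk {Units.mk0 a h}

@[simp]
theorem wittClass_zero : wittClass (0 : K) = 0 := dif_pos rfl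

theorem wittClass_of_ne_zero {a : K} (h : a ≠ 0) : wittClass a = wittMk {Units.mk0 a h} :=
  dif_neg h

theorem sum_map_wittClass (s : Multiset Kˣ) :
    ((s.map Units.val).map wittClass).sum = wittMk s := by
  induction s using Multiset.induction_on with
  | empty => simp
  | cons a s ih =>
    rw [Multiset.map_cons, Multiset.map_cons, Multiset.sum_cons, ih,
      wittClass_of_ne_zero a.ne_zero, Units.mk0_val, ← map_add, Multiset.singleton_add]

variable [NeZero (2 : K)]

theorem wittMk_add_neg (a : Kˣ) : wittMk {a, -a} = 0 :=
  (AddCon.eq _).2 ⟨0, 1, by simpa using isometryCon_hyperbolicPlane two_ne_zero a⟩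

theorem exists_add_wittMk_eq_zero (s : Multiset Kˣ) : ∃ t, t + wittMk s = 0 := by
  refine ⟨wittMk (s.map (-·)), ?_⟩
  induction s using Multiset.induction_on with
  | empty => simp
  | cons a s ih =>
    rw [Multiset.map_cons, ← Multiset.singleton_add, ← Multiset.singleton_add, map_add, map_add,
      add_add_add_comm, ih, add_zero, ← map_add, add_comm]
    exact wittMk_add_neg a

noncomputable instance : AddCommGroup (WittGroup K) :=
  have exists_neg (x : WittGroup K) : ∃ y, y + x = 0 := by
    obtain ⟨s, rfl⟩ := AddCon.mk'_surjective x
    exact exists_add_wittMk_eq_zero s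
  { (inferInstance : AddCommMonoid (WittGroup K)) with
    neg x := (exists_neg x).choose
    neg_add_cancel x := (exists_neg x).choose_spec
    zsmul := @zsmulRec (WittGroup K) _ _ ⟨fun x => (exists_neg x).choose⟩ nsmulRec }

theorem wittClass_add_wittClass_neg (a : K) : wittClass a + wittClass (-a) = 0 := by
  by_cases ha : a = 0
  · simp [ha]
  have hneg : Units.mk0 (-a) (neg_ne_zero.2 ha) = -Units.mk0 a ha := Units.ext rfl
  rw [wittClass_of_ne_zero ha, wittClass_of_ne_zero (neg_ne_zero.2 ha), hneg, ← map_add]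
  exact wittMk_add_neg _

theorem isWittSymbol_wittClass : IsWittSymbol (wittClass : K → WittGroup K) where
  map_neg a := eq_neg_of_add_eq_zero_right (wittClass_add_wittClass_neg a)
  map_mul_sq a c hc := by
    by_cases ha : a = 0
    · simp [ha]
    rw [wittClass_of_ne_zero ha, wittClass_of_ne_zero (mul_ne_zero ha (pow_ne_zero 2 hc)),
      ← wittMk_eq_of_isometryCon (isometryCon_mul_sq (Units.mk0 a ha) (Units.mk0 c hc))]
    congr
    ext
    simp
  map_add a b := by
    by_cases ha : a = 0
    · simp [ha]
    by_cases hb : b = 0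
    · simp [hb]
    by_cases hab : a + b = 0
    · rw [hab, mul_zero, eq_neg_of_add_eq_zero_right hab, wittClass_add_wittClass_neg,
        wittClass_zero, add_zero]
    rw [wittClass_of_ne_zero ha, wittClass_of_ne_zero hb, wittClass_of_ne_zero hab,
      wittClass_of_ne_zero (mul_ne_zero (mul_ne_zero ha hb) hab), ← map_add, ← map_add]
    have h : (Units.mk0 a ha : K) * 1 ^ 2 + (Units.mk0 b hb : K) * 1 ^ 2 = Units.mk0 _ hab := by
      simp
    have hprod : Units.mk0 _ (mul_ne_zero (mul_ne_zero ha hb) hab) =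
        Units.mk0 a ha * Units.mk0 b hb * Units.mk0 _ hab := by
      ext
      simp
    rw [hprod]
    exact wittMk_eq_of_isometryCon (isometryCon_of_represents h)

end WittClass

/-! ### The Witt group of `ℚ` along primes -/

section SmoothNumbers

theorem natAbs_mul_mem_smoothNumbers {n : ℕ} {u v : ℤ} (hu : u.natAbs ∈ n.smoothNumbers)
    (hv : v.natAbs ∈ n.smoothNumbers) : (u * v).natAbs ∈ n.smoothNumbers :=
  Int.natAbs_mul u v ▸ Nat.mul_mem_smoothNumbers hu hv

variable {p : ℕ} [Fact p.Prime]

theorem val_mem_smoothNumbers {x : ZMod p} (hx : x ≠ 0) : x.val ∈ p.smoothNumbers :=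
  Nat.mem_smoothNumbers_of_lt (ZMod.val_pos.2 hx) (ZMod.val_lt x)

theorem cast_ne_zero_of_mem_smoothNumbers {n : ℕ} (hn : n ∈ p.smoothNumbers) :
    (n : ZMod p) ≠ 0 := by
  rw [Ne, ZMod.natCast_eq_zero_iff]
  exact ((Fact.out : p.Prime).coprime_iff_not_dvd).1 ((Fact.out : p.Prime).smoothNumbers_coprime hn)

end SmoothNumbers

section Filtration

variable {A : Type*} [AddCommGroup A]

/-- The subgroup generated by the values of a symbol on `⟨m⟩`, for the natural numbers `m` all of
whose prime factors are less than `n`. -/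
def smoothSubgroup (ψ : ℚ → A) (n : ℕ) : AddSubgroup A :=
  AddSubgroup.closure ((fun m : ℕ => ψ m) '' n.smoothNumbers)

/-- Tate's residue symbol at `p`: the class of `⟨p x⟩`, for the least nonnegative representative of
`x`, modulo the forms built from smaller primes. -/
def residueSymbol (ψ : ℚ → A) (p : ℕ) (x : ZMod p) : A ⧸ smoothSubgroup ψ p :=
  (ψ (p * x.val) : A)

theorem smoothSubgroup_mono (ψ : ℚ → A) : Monotone (smoothSubgroup ψ) := fun _ _ h =>
  AddSubgroup.closure_mono (Set.image_mono (Nat.smoothNumbers_mono h))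

theorem smoothSubgroup_zero (ψ : ℚ → A) : smoothSubgroup ψ 0 = AddSubgroup.zmultiples (ψ 1) := by
  rw [smoothSubgroup, Nat.smoothNumbers_zero, Set.image_singleton, Nat.cast_one,
    AddSubgroup.zmultiples_eq_closure]

theorem smoothSubgroup_succ_of_not_prime (ψ : ℚ → A) {n : ℕ} (hn : ¬n.Prime) :
    smoothSubgroup ψ (n + 1) = smoothSubgroup ψ n := by
  rw [smoothSubgroup, Nat.smoothNumbers_succ hn, smoothSubgroup]

namespace IsWittSymbol

variable {ψ : ℚ → A} {p : ℕ}

theorem apply_mem_smoothSubgroup (hψ : IsWittSymbol ψ) {n : ℕ} {u : ℤ}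
    (hu : u.natAbs ∈ n.smoothNumbers) : ψ u ∈ smoothSubgroup ψ n := by
  obtain ⟨m, rfl | rfl⟩ := u.eq_nat_or_neg
  all_goals
    simp only [Int.natAbs_neg, Int.natAbs_natCast] at hu
    have h : ψ m ∈ smoothSubgroup ψ n := AddSubgroup.subset_closure ⟨m, hu, rfl⟩
  · exact_mod_cast h
  · push_cast
    rw [hψ.map_neg]
    exact neg_mem h

theorem mk_apply_eq_zero (hψ : IsWittSymbol ψ) {u : ℤ} (hu : u.natAbs ∈ p.smoothNumbers) :
    (ψ u : A ⧸ smoothSubgroup ψ p) = 0 :=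
  (QuotientAddGroup.eq_zero_iff _).2 (hψ.apply_mem_smoothSubgroup hu)

/-- Since `⟨pcv⟩ + ⟨p²cl⟩ = ⟨pcu⟩ + ⟨pcv · p²cl · pcu⟩`, only the smooth forms `⟨cl⟩` and
`⟨uvcl⟩` distinguish the two sides. -/
theorem mk_shift (hψ : IsWittSymbol ψ) (hp : p ≠ 0) {u v c l : ℤ}
    (hu : u.natAbs ∈ p.smoothNumbers) (hv : v.natAbs ∈ p.smoothNumbers)
    (hc : c.natAbs ∈ p.smoothNumbers) (hl : l.natAbs < p) (h : u = v + p * l) :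
    (ψ (p * (u * c)) : A ⧸ smoothSubgroup ψ p) = (ψ (p * (v * c)) : A) := by
  rcases eq_or_ne l 0 with rfl | hl0
  · simp [h]
  replace hl := Nat.mem_smoothNumbers_of_lt (Int.natAbs_pos.2 hl0) hl
  have hp0 : (p : ℚ) ≠ 0 := Nat.cast_ne_zero.2 hp
  have hc0 : (c : ℚ) ≠ 0 :=
    Int.cast_ne_zero.2 (Int.natAbs_ne_zero.1 (Nat.ne_zero_of_mem_smoothNumbers hc))
  have hlc : ψ (l * c * p ^ 2) = ψ ((l * c : ℤ) : ℚ) := by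
    rw [hψ.map_mul_sq _ hp0, Int.cast_mul]
  have huvlc : ψ (p * (v * c) * (l * c * p ^ 2) * (p * (u * c))) =
      ψ ((u * v * l * c : ℤ) : ℚ) := by
    rw [← hψ.map_mul_sq ((u * v * l * c : ℤ) : ℚ) (mul_ne_zero (pow_ne_zero 2 hp0) hc0)]
    push_cast
    ring_nf
  have hsum : (p * (v * c) + l * c * p ^ 2 : ℚ) = p * (u * c) := by
    rw [h]
    push_cast
    ring
  have key := congrArg (QuotientAddGroup.mk' (smoothSubgroup ψ p))
    (hψ.map_add (p * (v * c)) (l * c * p ^ 2))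
  rw [hsum, huvlc, hlc] at key
  simp only [QuotientAddGroup.mk'_apply, QuotientAddGroup.mk_add] at key
  rw [hψ.mk_apply_eq_zero (natAbs_mul_mem_smoothNumbers hl hc), add_zero,
    hψ.mk_apply_eq_zero (natAbs_mul_mem_smoothNumbers (natAbs_mul_mem_smoothNumbers
      (natAbs_mul_mem_smoothNumbers hu hv) hl) hc), add_zero] at key
  exact key.symm

variable [Fact p.Prime]

theorem mk_natCast_mul (hψ : IsWittSymbol ψ) {n : ℕ} (hn : n ∈ p.smoothNumbers) {c : ℤ}
    (hc : c.natAbs ∈ p.smoothNumbers) :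
    (ψ (p * (n * c)) : A ⧸ smoothSubgroup ψ p) = (ψ (p * ((n : ZMod p).val * c)) : A) := by
  induction n using induction_on_primes generalizing c with
  | zero => exact absurd rfl (Nat.ne_zero_of_mem_smoothNumbers hn)
  | one => rw [ZMod.val_natCast_of_lt (Fact.out : p.Prime).one_lt]
  | prime_mul q m hq ih =>
    have hp : p.Prime := Fact.out
    have hq_mem : q ∈ p.smoothNumbers := Nat.mem_smoothNumbers_of_dvd hn (dvd_mul_right q m)
    have hm : m ∈ p.smoothNumbers := Nat.mem_smoothNumbers_of_dvd hn (dvd_mul_left m q)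
    have hqp : q < p := (Nat.mem_smoothNumbers'.1 hq_mem) q hq dvd_rfl
    have hm_val : (m : ZMod p).val ∈ p.smoothNumbers :=
      val_mem_smoothNumbers (cast_ne_zero_of_mem_smoothNumbers hm)
    have hqm_val : ((q * m : ℕ) : ZMod p).val ∈ p.smoothNumbers :=
      val_mem_smoothNumbers (cast_ne_zero_of_mem_smoothNumbers hn)
    have hdiv : (m : ZMod p).val * q =
        ((q * m : ℕ) : ZMod p).val + p * ((m : ZMod p).val * q / p) := by
      rw [mul_comm q m, Nat.cast_mul, ZMod.val_mul, ZMod.val_natCast_of_lt hqp]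
      exact (Nat.mod_add_div _ p).symm
    have hlt : (m : ZMod p).val * q / p < p :=
      Nat.div_lt_of_lt_mul (Nat.mul_lt_mul'' (ZMod.val_lt _) hqp)
    have hshift := hψ.mk_shift hp.ne_zero (u := ((m : ZMod p).val * q : ℕ))
      (v := ((q * m : ℕ) : ZMod p).val) (l := ((m : ZMod p).val * q / p : ℕ))
      (Nat.mul_mem_smoothNumbers hm_val hq_mem) hqm_val hc hlt (by exact_mod_cast hdiv)
    have hih := ih hm (natAbs_mul_mem_smoothNumbers (u := q) hq_mem hc)
    push_cast at hih hshift ⊢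
    rw [mul_comm (q : ℚ), mul_assoc (m : ℚ), hih, ← mul_assoc _ (q : ℚ), hshift]

theorem residueSymbol_neg (hψ : IsWittSymbol ψ) (x : ZMod p) :
    residueSymbol ψ p (-x) = -residueSymbol ψ p x := by
  rw [residueSymbol, residueSymbol, ← QuotientAddGroup.mk_neg, ← hψ.map_neg]
  by_cases hx : x = 0
  · simp [hx]
  have hp : p.Prime := Fact.out
  have h1 : (1 : ℤ).natAbs ∈ p.smoothNumbers := Nat.mem_smoothNumbers_of_lt one_pos hp.one_lt
  have : NeZero x := ⟨hx⟩
  have hval : ((-x).val : ℤ) = -x.val + p * 1 := by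
    rw [ZMod.val_neg_of_ne_zero, Nat.cast_sub (ZMod.val_lt x).le]
    ring
  simpa using hψ.mk_shift hp.ne_zero (u := (-x).val) (v := -(x.val : ℤ)) (l := 1)
    (val_mem_smoothNumbers (neg_ne_zero.2 hx))
    (by simpa only [Int.natAbs_neg, Int.natAbs_natCast] using val_mem_smoothNumbers hx) h1 hp.one_lt
    hval

theorem mk_mul_eq_residueSymbol (hψ : IsWittSymbol ψ) {u : ℤ} (hu : u.natAbs ∈ p.smoothNumbers) :
    (ψ (p * u) : A ⧸ smoothSubgroup ψ p) = residueSymbol ψ p u := by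
  have h1 : (1 : ℤ).natAbs ∈ p.smoothNumbers :=
    Nat.mem_smoothNumbers_of_lt one_pos (Fact.out : p.Prime).one_lt
  obtain ⟨m, rfl | rfl⟩ := u.eq_nat_or_neg
  all_goals
    simp only [Int.natAbs_neg, Int.natAbs_natCast] at hu
    have key := hψ.mk_natCast_mul hu h1
    simp only [Int.cast_one, mul_one] at key
  · simpa only [Int.cast_natCast, residueSymbol] using key
  · push_cast
    rw [residueSymbol_neg hψ, mul_neg, hψ.map_neg, QuotientAddGroup.mk_neg, key, residueSymbol]

theorem residueSymbol_intCast_add (hψ : IsWittSymbol ψ) {u v : ℤ}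
    (hu : u.natAbs ∈ p.smoothNumbers) (hv : v.natAbs ∈ p.smoothNumbers)
    (huv : (u + v).natAbs ∈ p.smoothNumbers) :
    residueSymbol ψ p u + residueSymbol ψ p v =
      residueSymbol ψ p (u + v) + residueSymbol ψ p (u * v * (u + v)) := by
  have key := congrArg (QuotientAddGroup.mk' (smoothSubgroup ψ p)) (hψ.map_add (p * u) (p * v))
  rw [← mul_add, show (p * u * (p * v) * (p * (u + v)) : ℚ) =
      p * (u * v * (u + v) : ℤ) * (p : ℚ) ^ 2 by push_cast; ring,
    hψ.map_mul_sq _ (Nat.cast_ne_zero.2 (Fact.out : p.Prime).ne_zero), ← Int.cast_add] at key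
  simp only [QuotientAddGroup.mk'_apply, QuotientAddGroup.mk_add] at key
  rw [hψ.mk_mul_eq_residueSymbol hu, hψ.mk_mul_eq_residueSymbol hv,
    hψ.mk_mul_eq_residueSymbol huv, hψ.mk_mul_eq_residueSymbol
      (natAbs_mul_mem_smoothNumbers (natAbs_mul_mem_smoothNumbers hu hv) huv)] at key
  simpa only [Int.cast_add, Int.cast_mul] using key

theorem isWittSymbol_residueSymbol (hψ : IsWittSymbol ψ) : IsWittSymbol (residueSymbol ψ p) where
  map_neg := hψ.residueSymbol_neg
  map_mul_sq x c hc := by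
    by_cases hx : x = 0
    · simp [hx]
    have hx_mem := val_mem_smoothNumbers hx
    have hc_mem := val_mem_smoothNumbers hc
    have key := hψ.mk_mul_eq_residueSymbol (p := p) (u := (x.val * (c.val * c.val) : ℕ))
      (Nat.mul_mem_smoothNumbers hx_mem (Nat.mul_mem_smoothNumbers hc_mem hc_mem))
    simp only [Int.cast_natCast, Nat.cast_mul, ZMod.natCast_zmod_val, Int.cast_mul] at key
    rw [pow_two, ← key, residueSymbol, ← pow_two, ← mul_assoc,
      hψ.map_mul_sq _ (Nat.cast_ne_zero.2 (Nat.ne_zero_of_mem_smoothNumbers hc_mem))]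
  map_add x y := by
    by_cases hx : x = 0
    · simp [hx, add_comm]
    by_cases hy : y = 0
    · simp [hy]
    by_cases hxy : x + y = 0
    · have h0 : residueSymbol ψ p 0 + residueSymbol ψ p 0 = 0 := by
        simpa using congrArg (residueSymbol ψ p 0 + ·) (hψ.residueSymbol_neg (p := p) 0)
      rw [hxy, mul_zero, h0, eq_neg_of_add_eq_zero_right hxy, hψ.residueSymbol_neg, add_neg_cancel]
    have hx_pos := ZMod.val_pos.2 hx
    have hx_lt := ZMod.val_lt x
    have hy_pos := ZMod.val_pos.2 hy
    have hy_lt := ZMod.val_lt y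
    have hne : (x.val : ℤ) + (y.val - p) ≠ 0 := fun h => hxy <| by
      simpa using congrArg (Int.cast : ℤ → ZMod p) h
    -- The representative `y.val - p` of `y` keeps the sum smaller than `p` in absolute value.
    simpa using hψ.residueSymbol_intCast_add (p := p) (u := x.val) (v := y.val - p)
      (val_mem_smoothNumbers hx) (Nat.mem_smoothNumbers_of_lt (by lia) (by lia))
      (Nat.mem_smoothNumbers_of_lt (Int.natAbs_pos.2 hne) (by lia))

end IsWittSymbol

end Filtration

section Descent

variable {A : Type*} [AddCommGroup A] {ψ : ℚ → A}

namespace IsWittSymbol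

theorem exists_apply_mem_smoothSubgroup (hψ : IsWittSymbol ψ) {q : ℚ} (hq : q ≠ 0) :
    ∃ n, ψ q ∈ smoothSubgroup ψ n := by
  have hden : (q.den : ℚ) ≠ 0 := Nat.cast_ne_zero.2 q.den_ne_zero
  have hqd : q * q.den ^ 2 = ((q.num * q.den : ℤ) : ℚ) := by
    push_cast
    rw [sq, ← mul_assoc, Rat.mul_den_eq_num]
  refine ⟨(q.num * q.den).natAbs + 1, ?_⟩
  rw [← hψ.map_mul_sq q hden, hqd]
  refine hψ.apply_mem_smoothSubgroup (Nat.mem_smoothNumbers_of_lt ?_ (Nat.lt_succ_self _))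
  exact Int.natAbs_pos.2 (mul_ne_zero (Rat.num_ne_zero.2 hq) (Int.natCast_ne_zero.2 q.den_ne_zero))

theorem exists_sum_mem_smoothSubgroup (hψ : IsWittSymbol ψ) (s : Multiset ℚˣ) :
    ∃ n, ((s.map Units.val).map ψ).sum ∈ smoothSubgroup ψ n := by
  induction s using Multiset.induction_on with
  | empty => exact ⟨0, by simp⟩
  | cons a s ih =>
    obtain ⟨m, hm⟩ := ih
    obtain ⟨n, hn⟩ := hψ.exists_apply_mem_smoothSubgroup a.ne_zero
    refine ⟨max m n, ?_⟩
    rw [Multiset.map_cons, Multiset.map_cons, Multiset.sum_cons]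
    exact add_mem (smoothSubgroup_mono ψ (le_max_right m n) hn)
      (smoothSubgroup_mono ψ (le_max_left m n) hm)

theorem exists_eq_sum_of_mem_smoothSubgroup (hψ : IsWittSymbol ψ) {n : ℕ} {g : A}
    (hg : g ∈ smoothSubgroup ψ n) : ∃ as : Multiset ℤ, (∀ a ∈ as, a.natAbs ∈ n.smoothNumbers) ∧
      g = (as.map fun a : ℤ => ψ a).sum := by
  induction hg using AddSubgroup.closure_induction with
  | mem g hg =>
    obtain ⟨m, hm, rfl⟩ := hg
    exact ⟨{(m : ℤ)}, by simpa using hm, by simp⟩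
  | zero => exact ⟨0, by simp, by simp⟩
  | add g g' _ _ ih ih' =>
    obtain ⟨as, has, rfl⟩ := ih
    obtain ⟨bs, hbs, rfl⟩ := ih'
    exact ⟨as + bs, fun a ha => (Multiset.mem_add.1 ha).elim (has a) (hbs a), by simp⟩
  | neg g _ ih =>
    obtain ⟨as, has, rfl⟩ := ih
    exact ⟨as.map Neg.neg, by simpa using has, by simp [hψ.map_neg]⟩

theorem mk_eq_sum_residueSymbol (hψ : IsWittSymbol ψ) {p : ℕ} [Fact p.Prime] {g : A}
    (hg : g ∈ smoothSubgroup ψ (p + 1)) : ∃ us : Multiset (ZMod p), (∀ u ∈ us, u ≠ 0) ∧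
      (g : A ⧸ smoothSubgroup ψ p) = (us.map (residueSymbol ψ p)).sum := by
  induction hg using AddSubgroup.closure_induction with
  | mem g hg =>
    have hp : p.Prime := Fact.out
    obtain ⟨m, hm, rfl⟩ := hg
    obtain ⟨k, b, hpb, rfl⟩ :=
      Nat.exists_eq_pow_mul_and_not_dvd (Nat.ne_zero_of_mem_smoothNumbers hm) p hp.ne_one
    have hb : b ∈ p.smoothNumbers := Nat.mem_smoothNumbers'.2 fun q hq hqb =>
      (Nat.le_of_lt_succ (Nat.mem_smoothNumbers'.1 hm q hq (hqb.mul_left _))).lt_of_ne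
        (by rintro rfl; exact hpb hqb)
    have hpj (j : ℕ) : (p : ℚ) ^ j ≠ 0 := pow_ne_zero j (Nat.cast_ne_zero.2 hp.ne_zero)
    obtain ⟨j, rfl | rfl⟩ := k.even_or_odd'
    · refine ⟨0, by simp, ?_⟩
      have hsq : ((p ^ (2 * j) * b : ℕ) : ℚ) = (b : ℤ) * (p ^ j) ^ 2 := by push_cast; ring
      simp only [hsq]
      rw [hψ.map_mul_sq _ (hpj j), hψ.mk_apply_eq_zero hb, Multiset.map_zero, Multiset.sum_zero]
    · refine ⟨{(b : ZMod p)}, by simpa using cast_ne_zero_of_mem_smoothNumbers hb, ?_⟩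
      have hsq : ((p ^ (2 * j + 1) * b : ℕ) : ℚ) = p * (b : ℤ) * (p ^ j) ^ 2 := by
        push_cast
        ring
      simp only [hsq]
      rw [hψ.map_mul_sq _ (hpj j), hψ.mk_mul_eq_residueSymbol hb, Multiset.map_singleton,
        Multiset.sum_singleton, Int.cast_natCast]
  | zero => exact ⟨0, by simp, by simp⟩
  | add g g' _ _ ih ih' =>
    obtain ⟨us, hus, h⟩ := ih
    obtain ⟨ws, hws, h'⟩ := ih'
    exact ⟨us + ws, fun u hu => (Multiset.mem_add.1 hu).elim (hus u) (hws u), by simp [h, h']⟩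
  | neg g _ ih =>
    obtain ⟨us, hus, h⟩ := ih
    exact ⟨us.map Neg.neg, by simpa using hus, by simp [h, hψ.residueSymbol_neg]⟩

theorem mem_smoothSubgroup_of_isIsotropicDiag (hψ : IsWittSymbol ψ) {p : ℕ} [Fact p.Prime]
    {g : A} (hg : g ∈ smoothSubgroup ψ (p + 1))
    (h : ∀ us : Multiset (ZMod p), (∀ u ∈ us, u ≠ 0) → us ≠ 0 →
      (g : A ⧸ smoothSubgroup ψ p) = (us.map (residueSymbol ψ p)).sum → IsIsotropicDiag us) :
    g ∈ smoothSubgroup ψ p := by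
  obtain ⟨us, ⟨hus, hsum⟩, hmin⟩ :=
    exists_minimalFor_of_wellFoundedLT _ Multiset.card (hψ.mk_eq_sum_residueSymbol hg)
  rcases eq_or_ne us 0 with rfl | hus0
  · simpa using hsum
  obtain ⟨ws, hws, hlt, hws_sum⟩ :=
    hψ.isWittSymbol_residueSymbol.exists_shorter_sum_eq hus (h us hus hus0 hsum)
  exact absurd (hmin ⟨hws, hsum.trans hws_sum⟩ hlt.le) hlt.not_ge

theorem mem_zmultiples_of_isIsotropicDiag (hψ : IsWittSymbol ψ) {n : ℕ} {g : A}
    (hg : g ∈ smoothSubgroup ψ n)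
    (h : ∀ (p : ℕ) [Fact p.Prime] (us : Multiset (ZMod p)), (∀ u ∈ us, u ≠ 0) → us ≠ 0 →
      (g : A ⧸ smoothSubgroup ψ p) = (us.map (residueSymbol ψ p)).sum → IsIsotropicDiag us) :
    g ∈ AddSubgroup.zmultiples (ψ 1) := by
  induction n with
  | zero => rwa [smoothSubgroup_zero] at hg
  | succ p ih =>
    by_cases hp : p.Prime
    · have : Fact p.Prime := ⟨hp⟩
      exact ih (hψ.mem_smoothSubgroup_of_isIsotropicDiag hg (h p))
    · exact ih (smoothSubgroup_succ_of_not_prime ψ hp ▸ hg)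

end IsWittSymbol

end Descent

/-! ### Rational forms with a self-dual lattice -/

theorem sum_sq_div_eq_zero_of_sum_sq_div_eq_intCast {p : ℕ} [Fact p.Prime] {ι κ : Type*}
    [Fintype ι] [Fintype κ] {a x : ι → ℤ} {b y : κ → ℤ} (ha : ∀ i, (a i : ZMod p) ≠ 0)
    (hb : ∀ j, (b j : ZMod p) ≠ 0) {m : ℤ}
    (h : ∑ i, (x i : ℚ) ^ 2 / a i + ∑ j, (y j : ℚ) ^ 2 / (p * b j) = m) :
    ∑ j, (y j : ZMod p) ^ 2 / b j = 0 := by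
  have haQ (i : ι) : (a i : ℚ) ≠ 0 := Int.cast_ne_zero.2 fun h => ha i (by simp [h])
  have hbQ (j : κ) : (b j : ℚ) ≠ 0 := Int.cast_ne_zero.2 fun h => hb j (by simp [h])
  have hp : (p : ℚ) ≠ 0 := Nat.cast_ne_zero.2 (Fact.out : p.Prime).ne_zero
  obtain ⟨D, hD, hDa, hDb⟩ :
      ∃ D : ℤ, (D : ZMod p) ≠ 0 ∧ (∀ i, a i ∣ D) ∧ ∀ j, b j ∣ D := by
    refine ⟨(∏ i, a i) * ∏ j, b j, ?_, fun i => ?_, fun j => ?_⟩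
    · push_cast
      exact mul_ne_zero (Finset.prod_ne_zero_iff.2 fun i _ => ha i)
        (Finset.prod_ne_zero_iff.2 fun j _ => hb j)
    · exact (Finset.dvd_prod_of_mem a (Finset.mem_univ i)).mul_right _
    · exact (Finset.dvd_prod_of_mem b (Finset.mem_univ j)).mul_left _
  choose a' ha' using hDa
  choose b' hb' using hDb
  have key : p * ∑ i, x i ^ 2 * a' i + ∑ j, y j ^ 2 * b' j = p * (D * m) := by
    have hterm {t c c' : ℤ} (hc : (c : ℚ) ≠ 0) (hD : D = c * c') :
        (t : ℚ) ^ 2 * c' = D * (t ^ 2 / c) := by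
      rw [hD]
      push_cast
      field_simp
    have hterm' (j : κ) : (y j : ℚ) ^ 2 * b' j = p * (D * (y j ^ 2 / (p * b j))) := by
      rw [hterm (hbQ j) (hb' j)]
      field_simp
    rw [← Int.cast_inj (α := ℚ)]
    push_cast
    rw [← h, mul_add, mul_add]
    simp only [Finset.mul_sum, hterm', hterm (haQ _) (ha' _)]
  replace key := congrArg (Int.cast : ℤ → ZMod p) key
  push_cast at key
  rw [CharP.cast_eq_zero, zero_mul, zero_mul, zero_add] at key
  refine (mul_eq_zero.1 ?_).resolve_left hD
  rw [Finset.mul_sum, ← key]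
  refine Finset.sum_congr rfl fun j _ => ?_
  rw [hb' j, Int.cast_mul]
  field_simp [hb j]

section SelfDual

variable {V : Type*} [AddCommGroup V] [Module ℚ V] {B : BilinForm ℚ V}

theorem mem_of_forall_mem_dualSubmodule (hB : B.IsSymm) (hnd : B.Nondegenerate) (N : Submodule ℤ V)
    [Submodule.IsLattice ℚ N] {x : V}
    (hx : ∀ z ∈ B.dualSubmodule N, B x z ∈ (1 : Submodule ℤ ℚ)) : x ∈ N := by
  have b := Module.Free.chooseBasis ℤ N
  have hb : Submodule.span ℤ (Set.range (b.extendOfIsLattice ℚ)) = N := by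
    have hrange : Set.range (b.extendOfIsLattice ℚ) = N.subtype '' Set.range b := by
      rw [← Set.range_comp]
      congr 1
      ext i
      simp
    rw [hrange, ← Submodule.map_span, b.span_eq, Submodule.map_top, Submodule.range_subtype]
  have key := BilinForm.dualSubmodule_dualSubmodule_of_basis (R := ℤ) B hnd hB
    (b.extendOfIsLattice ℚ)
  rw [hb] at key
  exact key ▸ hx

theorem mem_dualSubmodule_iff_exists_intCast {N : Submodule ℤ V} {x : V} :
    x ∈ B.dualSubmodule N ↔ ∀ y ∈ N, ∃ k : ℤ, B x y = k := by
  simp only [BilinForm.mem_dualSubmodule, Submodule.mem_one, eq_intCast, eq_comm]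

theorem mem_dualSubmodule_span_range_iff {ι : Type*} {e : ι → V} {x : V} :
    x ∈ B.dualSubmodule (Submodule.span ℤ (Set.range e)) ↔ ∀ i, ∃ k : ℤ, B x (e i) = k := by
  rw [mem_dualSubmodule_iff_exists_intCast]
  refine ⟨fun h i => h _ (Submodule.subset_span ⟨i, rfl⟩), fun h y hy => ?_⟩
  induction hy using Submodule.span_induction with
  | mem _ hy => exact hy.elim fun i hi => hi ▸ h i
  | zero => exact ⟨0, by simp⟩
  | add _ _ _ _ ih ih' =>
    obtain ⟨⟨k, hk⟩, k', hk'⟩ := And.intro ih ih'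
    exact ⟨k + k', by simp [hk, hk']⟩
  | smul c _ _ ih =>
    obtain ⟨k, hk⟩ := ih
    exact ⟨c * k, by simp [hk]⟩

theorem exists_apply_eq_mul_of_mem_span {ι : Type*} {e : ι → V} {n : ι → ℤ}
    (he : ∀ i, B (e i) (e i) = n i) (horth : ∀ i j, i ≠ j → B (e i) (e j) = 0) {m : V}
    (hm : m ∈ Submodule.span ℤ (Set.range e)) (i : ι) : ∃ c : ℤ, B m (e i) = n i * c := by
  induction hm using Submodule.span_induction with
  | mem _ hm =>
    obtain ⟨j, rfl⟩ := hm
    rcases eq_or_ne j i with rfl | hji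
    exacts [⟨1, by simp [he]⟩, ⟨0, by simp [horth j i hji]⟩]
  | zero => exact ⟨0, by simp⟩
  | add _ _ _ _ ih ih' =>
    obtain ⟨⟨c, hc⟩, c', hc'⟩ := And.intro ih ih'
    exact ⟨c + c', by simp [hc, hc', mul_add]⟩
  | smul a _ _ ih =>
    obtain ⟨c, hc⟩ := ih
    exact ⟨a * c, by simp [hc, mul_left_comm]⟩

/-- Otherwise `e j / p` would pair integrally with the dual of `L + ⟨e i⟩`, hence lie in this
lattice, and its component in `L` would violate the claim. -/
theorem exists_mem_not_dvd_of_selfDual (hB : B.IsSymm) (hnd : B.Nondegenerate)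
    {L : Submodule ℤ V} [Submodule.IsLattice ℚ L] (hL : B.dualSubmodule L = L) {ι : Type*}
    [Finite ι] {e : ι → V} {n : ι → ℤ} (he : ∀ i, B (e i) (e i) = n i)
    (horth : ∀ i j, i ≠ j → B (e i) (e j) = 0) {p : ℤ} {j : ι} (hp : p ∣ n j)
    (hp2 : ¬p * p ∣ n j) :
    ∃ z ∈ L, ∃ x : ι → ℤ, (∀ i, B z (e i) = x i) ∧ ¬p ∣ x j := by
  obtain ⟨u, hu⟩ := hp
  have hp0 : (p : ℚ) ≠ 0 := by
    rw [Int.cast_ne_zero]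
    rintro rfl
    exact hp2 (by simp [hu])
  set M := Submodule.span ℤ (Set.range e)
  by_contra! hcon
  have hdvd {z : V} (hzL : z ∈ L) (hzM : z ∈ B.dualSubmodule M) : ∃ k : ℤ, B z (e j) = p * k := by
    choose x hx using mem_dualSubmodule_span_range_iff.1 hzM
    obtain ⟨k, hk⟩ := hcon z hzL x hx
    exact ⟨k, by rw [hx, hk, Int.cast_mul]⟩
  have : Submodule.IsLattice ℚ (L ⊔ M) := Submodule.IsLattice.of_le_of_isLattice_of_fg ℚ
    le_sup_left (Submodule.FG.sup Submodule.IsLattice.fg (Submodule.fg_span (Set.finite_range e)))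
  have hmem : (p : ℚ)⁻¹ • e j ∈ L ⊔ M := by
    refine mem_of_forall_mem_dualSubmodule hB hnd _ fun z hz => ?_
    obtain ⟨k, hk⟩ := hdvd (hL ▸ fun y hy => hz y (Submodule.mem_sup_left hy))
      fun y hy => hz y (Submodule.mem_sup_right hy)
    refine Submodule.mem_one.2 ⟨k, ?_⟩
    rw [map_smul, LinearMap.smul_apply, hB.eq, hk, smul_eq_mul, inv_mul_cancel_left₀ hp0]
    rfl
  obtain ⟨l, hl, m, hm, hlm⟩ := Submodule.mem_sup.1 hmem
  obtain rfl : l = (p : ℚ)⁻¹ • e j - m := eq_sub_of_add_eq hlm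
  obtain ⟨k, hk⟩ := hdvd hl <| mem_dualSubmodule_span_range_iff.2 fun i => by
    obtain ⟨c, hc⟩ := exists_apply_eq_mul_of_mem_span he horth hm i
    rcases eq_or_ne j i with rfl | hji
    · refine ⟨u - n j * c, ?_⟩
      simp [he, hc, hu, hp0]
    · exact ⟨-(n i * c), by simp [hc, horth j i hji]⟩
  obtain ⟨c, hc⟩ := exists_apply_eq_mul_of_mem_span he horth hm j
  have hu_eq : (u : ℚ) = p * (k + u * c) := by
    simp only [map_sub, map_smul, LinearMap.sub_apply, LinearMap.smul_apply, he, hu, hc,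
      Int.cast_mul, smul_eq_mul, inv_mul_cancel_left₀ hp0] at hk
    linear_combination hk
  exact hp2 ⟨k + u * c, by rw [hu, mul_assoc, ← Int.cast_inj (α := ℚ)]; push_cast; rw [← hu_eq]⟩

theorem apply_self_eq_sum_sq_div {ι : Type*} [Fintype ι] {e : ι → V}
    (he : ∀ i, B (e i) (e i) ≠ 0) (horth : ∀ i j, i ≠ j → B (e i) (e j) = 0) {z : V}
    (hz : z ∈ Submodule.span ℚ (Set.range e)) :
    B z z = ∑ i, B z (e i) ^ 2 / B (e i) (e i) := by
  classical
  obtain ⟨c, rfl⟩ := (Submodule.mem_span_range_iff_exists_fun ℚ).1 hz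
  have hcoord (j : ι) : B (∑ i, c i • e i) (e j) = c j * B (e j) (e j) := by
    rw [map_sum, LinearMap.sum_apply, Finset.sum_eq_single j]
    · simp
    · intro i _ hij
      simp [horth i j hij]
    · simp
  rw [map_sum]
  refine Finset.sum_congr rfl fun j _ => ?_
  rw [map_smul, smul_eq_mul, hcoord]
  field_simp [he j]

theorem exists_sum_mul_sq_eq_zero_of_selfDual (hB : B.IsSymm) (hnd : B.Nondegenerate)
    {L : Submodule ℤ V} [Submodule.IsLattice ℚ L] (hL : B.dualSubmodule L = L) {ι κ : Type*}
    [Finite ι] [Fintype κ] {e : ι ⊕ κ → V} (horth : ∀ i j, i ≠ j → B (e i) (e j) = 0)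
    (hspan : Submodule.span ℚ (Set.range e) = ⊤) {p : ℕ} [Fact p.Prime] {a : ι → ℤ} {b : κ → ℤ}
    (ha : ∀ i, (a i : ZMod p) ≠ 0) (hb : ∀ j, (b j : ZMod p) ≠ 0)
    (he : ∀ i, B (e i) (e i) = (Sum.elim a (fun j => p * b j) i : ℤ)) (k : κ) :
    ∃ y : κ → ZMod p, y k ≠ 0 ∧ ∑ j, b j * y j ^ 2 = 0 := by
  have := Fintype.ofFinite ι
  have hp0 : (p : ℤ) ≠ 0 := Int.natCast_ne_zero.2 (Fact.out : p.Prime).ne_zero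
  have hn : ∀ i, Sum.elim a (fun j => p * b j) i ≠ 0 := by
    rintro (i | j)
    · exact fun h => ha i (by rw [show a i = 0 from h, Int.cast_zero])
    · exact mul_ne_zero hp0 fun h => hb j (by rw [h, Int.cast_zero])
  have hpk : ¬(p : ℤ) * p ∣ p * b k := by
    rw [mul_dvd_mul_iff_left hp0, ← ZMod.intCast_zmod_eq_zero_iff_dvd]
    exact hb k
  obtain ⟨z, hz, x, hx, hxk⟩ :=
    exists_mem_not_dvd_of_selfDual hB hnd hL he horth (j := .inr k) (dvd_mul_right _ _) hpk
  obtain ⟨m, hm⟩ := mem_dualSubmodule_iff_exists_intCast.1 (hL.ge hz) z hz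
  rw [apply_self_eq_sum_sq_div (fun i => by rw [he, Int.cast_ne_zero]; exact hn i) horth
    (hspan ▸ Submodule.mem_top), Fintype.sum_sum_type] at hm
  simp only [he, hx, Sum.elim_inl, Sum.elim_inr, Int.cast_mul, Int.cast_natCast] at hm
  refine ⟨fun j => x (.inr j) / b j, div_ne_zero ?_ (hb k), ?_⟩
  · rwa [Ne, ZMod.intCast_zmod_eq_zero_iff_dvd]
  · rw [← sum_sq_div_eq_zero_of_sum_sq_div_eq_intCast ha hb hm]
    refine Finset.sum_congr rfl fun j _ => ?_
    field_simp [hb j]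

end SelfDual

namespace IsDiagonalOn

variable {V : Type} [AddCommGroup V] [Module ℚ V] {B : BilinForm ℚ V}

theorem isIsotropicDiag_of_selfDual (hB : B.IsSymm) {s t : Multiset ℚˣ}
    (h : IsDiagonalOn B (s + t) ⊤) {L : Submodule ℤ V} [Submodule.IsLattice ℚ L]
    (hL : B.dualSubmodule L = L) {p : ℕ} [Fact p.Prime] {as : Multiset ℤ}
    (has : ∀ a ∈ as, (a : ZMod p) ≠ 0) (hs : s.map Units.val = as.map (↑))
    {us : Multiset (ZMod p)} (hus : ∀ u ∈ us, u ≠ 0) (hus0 : us ≠ 0)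
    (ht : t.map Units.val = us.map fun u => (p * u.val : ℚ)) : IsIsotropicDiag us := by
  obtain ⟨U, W, hUW, hUW_orth, hU, hW⟩ := exists_of_add hB h
  obtain ⟨ι, _, v, a, rfl, hv, hv_orth, rfl⟩ := hU.exists_family hB hs
  obtain ⟨κ, _, w, b, rfl, hw, hw_orth, rfl⟩ := hW.exists_family hB ht
  replace has (i : ι) : (a i : ZMod p) ≠ 0 := has _ (Multiset.mem_map_of_mem _ (Finset.mem_univ i))
  replace hus (j : κ) : b j ≠ 0 := hus _ (Multiset.mem_map_of_mem _ (Finset.mem_univ j))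
  have hvw (i : ι) (j : κ) : B (v i) (w j) = 0 :=
    hUW_orth _ (Submodule.subset_span ⟨i, rfl⟩) _ (Submodule.subset_span ⟨j, rfl⟩)
  have horth : ∀ i j, i ≠ j → B (Sum.elim v w i) (Sum.elim v w j) = 0 := by
    rintro (i | i) (j | j) hij
    exacts [hv_orth i j (by simpa using hij), hvw i j, (hB.eq _ _).trans (hvw j i),
      hw_orth i j (by simpa using hij)]
  obtain ⟨u, hu⟩ := Multiset.exists_mem_of_ne_zero hus0
  obtain ⟨k, -, rfl⟩ := Multiset.mem_map.1 hu
  obtain ⟨y, hyk, hy⟩ := exists_sum_mul_sq_eq_zero_of_selfDual hB (h.nondegenerate hB) hL horth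
    (by rw [Set.Sum.elim_range, Submodule.span_union, hUW]) has (b := fun j => (b j).val)
    (by simpa using hus) (by rintro (i | j) <;> simp [hv, hw]) k
  refine ⟨Finset.univ.val.map fun j => (b j, y j), by simp, ?_,
    _, Multiset.mem_map_of_mem _ (Finset.mem_univ k), hyk⟩
  simpa using hy

end IsDiagonalOn

section TotallyIsotropic

variable {K V : Type u} [Field K] [AddCommGroup V] [Module K V] {B : BilinForm K V}

/-- `B` vanishes identically on some subspace of dimension at least `d`, i.e. the Witt index of `B`
is at least `d`. -/
def HasTotallyIsotropic (B : BilinForm K V) (d : ℕ) : Prop :=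
  ∃ W : Submodule K V, d ≤ Module.finrank K W ∧ ∀ x ∈ W, ∀ y ∈ W, B x y = 0

theorem HasTotallyIsotropic.exists_ne_zero (h : HasTotallyIsotropic B 1) :
    ∃ x ≠ 0, B x x = 0 := by
  obtain ⟨W, hW, hBW⟩ := h
  have hW0 : W ≠ ⊥ := by
    rintro rfl
    simp at hW
  obtain ⟨x, hx, hx0⟩ := W.exists_mem_ne_zero_of_ne_bot hW0
  exact ⟨x, hx0, hBW x hx x hx⟩

variable (B) in
/-- The orthogonal sum of `B` and the hyperbolic plane `⟨1, -1⟩`. -/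
def addHyperbolicPlane : BilinForm K (V × K × K) :=
  B.compl₁₂ (.fst K V (K × K)) (.fst K V (K × K)) +
    (LinearMap.mul K K).compl₁₂ (.fst K K K ∘ₗ .snd K V (K × K)) (.fst K K K ∘ₗ .snd K V (K × K)) -
    (LinearMap.mul K K).compl₁₂ (.snd K K K ∘ₗ .snd K V (K × K)) (.snd K K K ∘ₗ .snd K V (K × K))

@[simp]
theorem addHyperbolicPlane_apply (x y : V × K × K) :
    addHyperbolicPlane B x y = B x.1 y.1 + x.2.1 * y.2.1 - x.2.2 * y.2.2 :=
  rfl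

theorem isSymm_addHyperbolicPlane (hB : B.IsSymm) : (addHyperbolicPlane B).IsSymm :=
  ⟨fun x y => by simp [hB.eq x.1 y.1, mul_comm]⟩

theorem IsDiagonalOn.map {V' : Type u} [AddCommGroup V'] [Module K V'] {B' : BilinForm K V'}
    (f : V →ₗ[K] V') (hf : ∀ x y, B' (f x) (f y) = B x y) {s : Multiset Kˣ} {U : Submodule K V}
    (h : IsDiagonalOn B s U) : IsDiagonalOn B' s (U.map f) := by
  induction h with
  | zero => simpa using zero
  | cons hx hxU _ ih =>
    rw [Submodule.map_sup, Submodule.map_span, Set.image_singleton]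
    refine cons ((hf _ _).trans hx) ?_ ih
    rintro _ ⟨y, hy, rfl⟩
    rw [hf, hxU y hy]

theorem IsDiagonalOn.addHyperbolicPlane (hB : B.IsSymm) {s : Multiset Kˣ}
    (h : IsDiagonalOn B s ⊤) :
    IsDiagonalOn (addHyperbolicPlane B) (s + hyperbolicPlane K) ⊤ := by
  have hV := h.map (B' := _root_.addHyperbolicPlane B) (.inl K V (K × K)) (by simp)
  have hH : IsDiagonalOn (_root_.addHyperbolicPlane B) (hyperbolicPlane K)
      (Submodule.span K {((0, 1, 0) : V × K × K), ((0, 0, 1) : V × K × K)}) :=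
    (pair_iff (isSymm_addHyperbolicPlane hB)).2
      ⟨(0, 1, 0), (0, 0, 1), by simp, by simp, by simp, rfl⟩
  convert hV.add hH ?_
  · symm
    rw [eq_top_iff]
    rintro ⟨x, a, b⟩ -
    refine Submodule.mem_sup.2 ⟨_, ⟨x, Submodule.mem_top, rfl⟩, _,
      Submodule.mem_span_pair.2 ⟨a, b, rfl⟩, by simp⟩
  · rintro _ ⟨x, -, rfl⟩ y hy
    obtain ⟨a, b, rfl⟩ := Submodule.mem_span_pair.1 hy
    simp

/-- On the kernel of a suitable functional, the projection to `V` is isometric and injective. -/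
theorem HasTotallyIsotropic.of_addHyperbolicPlane [FiniteDimensional K V] {d : ℕ}
    (h : HasTotallyIsotropic (addHyperbolicPlane B) (d + 1)) : HasTotallyIsotropic B d := by
  obtain ⟨W, hWd, hW⟩ := h
  obtain ⟨χ, hχ⟩ : ∃ χ : W →ₗ[K] K, ∀ w, χ w = 0 → w.1.2.1 = w.1.2.2 ∧ (w.1.1 = 0 → w = 0) := by
    by_cases hex : ∃ w ∈ W, w.1 = 0 ∧ w ≠ 0 ∧ w.2.1 = w.2.2
    · obtain ⟨⟨x, a, b⟩, hwW, rfl : x = 0, hw0, rfl : a = b⟩ := hex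
      have ha : a ≠ 0 := by
        rintro rfl
        exact hw0 rfl
      refine ⟨.fst K K K ∘ₗ .snd K V (K × K) ∘ₗ W.subtype, ?_⟩
      rintro ⟨⟨y, b, c⟩, hy⟩ (rfl : b = 0)
      have hc : a * c = 0 := by simpa using hW _ hwW _ hy
      obtain rfl := (mul_eq_zero.1 hc).resolve_left ha
      exact ⟨rfl, by simp⟩
    · refine ⟨(.fst K K K - .snd K K K) ∘ₗ .snd K V (K × K) ∘ₗ W.subtype, fun w hw => ?_⟩
      have hw : w.1.2.1 = w.1.2.2 := sub_eq_zero.1 hw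
      refine ⟨hw, fun hw1 => ?_⟩
      by_contra hw0
      exact hex ⟨w, w.2, hw1, by simpa using hw0, hw⟩
  have hinj : Function.Injective (.fst K V (K × K) ∘ₗ W.subtype ∘ₗ χ.ker.subtype) := by
    refine (injective_iff_map_eq_zero _).2 fun w hw => Subtype.ext ((hχ w w.2).2 hw)
  refine ⟨LinearMap.range (.fst K V (K × K) ∘ₗ W.subtype ∘ₗ χ.ker.subtype), ?_, ?_⟩
  · rw [LinearMap.finrank_range_of_inj hinj]
    have hrank := χ.finrank_range_add_finrank_ker
    have hrange : Module.finrank K χ.range ≤ 1 := by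
      simpa using χ.range.finrank_le
    lia
  · rintro _ ⟨w, rfl⟩ _ ⟨w', rfl⟩
    simpa [(hχ w w.2).1, (hχ w' w'.2).1] using hW _ w.1.2 _ w'.1.2

theorem IsDiagonalOn.exists_totallyIsotropic [FiniteDimensional K V] (hB : B.IsSymm) {n : ℕ}
    {U : Submodule K V} (h : IsDiagonalOn B (n • hyperbolicPlane K) U) :
    ∃ W ≤ U, Module.finrank K W = n ∧ ∀ x ∈ W, ∀ y ∈ W, B x y = 0 := by
  induction n generalizing U with
  | zero => exact ⟨⊥, bot_le, by simp, by simp⟩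
  | succ n ih =>
    rw [succ_nsmul] at h
    obtain ⟨U₁, U₂, rfl, horth, h₁, h₂⟩ := exists_of_add hB h
    obtain ⟨W, hWU, hWn, hW⟩ := ih h₁
    obtain ⟨x, y, hx, hy, hxy, rfl⟩ := (pair_iff hB).1 h₂
    have hz : x + y ∈ Submodule.span K {x, y} := Submodule.mem_span_pair.2 ⟨1, 1, by simp⟩
    have hyx : B y x = 0 := (hB.eq x y).symm.trans hxy
    have hzW : x + y ∉ W := fun hzW => by
      simpa [hx, hyx] using horth _ (hWU hzW) x (Submodule.subset_span (Set.mem_insert x {y}))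
    have hzz : B (x + y) (x + y) = 0 := by simp [hx, hy, hxy, hyx]
    have hWz {w : V} (hw : w ∈ W) : B w (x + y) = 0 := horth w (hWU hw) _ hz
    have hzW_zero {w : V} (hw : w ∈ W) : B (x + y) w = 0 := (hB.eq w _).symm.trans (hWz hw)
    refine ⟨W ⊔ Submodule.span K {x + y}, sup_le_sup hWU (by simpa using hz), ?_, ?_⟩
    · rw [Submodule.finrank_sup_span_singleton hzW, hWn]
    · generalize x + y = z at *
      intro v hv w hw
      obtain ⟨v₁, hv₁, _, hz₁, rfl⟩ := Submodule.mem_sup.1 hv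
      obtain ⟨w₁, hw₁, _, hz₂, rfl⟩ := Submodule.mem_sup.1 hw
      obtain ⟨a, rfl⟩ := Submodule.mem_span_singleton.1 hz₁
      obtain ⟨b, rfl⟩ := Submodule.mem_span_singleton.1 hz₂
      simp [hW v₁ hv₁ w₁ hw₁, hzz, hWz hv₁, hzW_zero hw₁]

end TotallyIsotropic

section Stabilization

theorem isLattice_prod {V W : Type*} [AddCommGroup V] [Module ℚ V] [AddCommGroup W] [Module ℚ W]
    (M : Submodule ℤ V) (N : Submodule ℤ W) (hM : Submodule.IsLattice ℚ M)
    (hN : Submodule.IsLattice ℚ N) : Submodule.IsLattice ℚ (M.prod N) where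
  fg := hM.fg.prod hN.fg
  span_eq_top := by
    rw [eq_top_iff, ← Submodule.prod_top, ← hM.span_eq_top, ← hN.span_eq_top,
      ← LinearMap.span_inl_union_inr]
    refine Submodule.span_mono (Set.union_subset ?_ ?_)
    · rintro _ ⟨x, hx, rfl⟩
      exact ⟨hx, zero_mem N⟩
    · rintro _ ⟨y, hy, rfl⟩
      exact ⟨zero_mem M, hy⟩

theorem isLattice_one : Submodule.IsLattice ℚ (1 : Submodule ℤ ℚ) where
  fg := Submodule.one_eq_span (R := ℤ) (A := ℚ) ▸ Submodule.fg_span_singleton 1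
  span_eq_top := (Ideal.eq_top_iff_one _).2
    (Submodule.subset_span (Submodule.mem_one.2 ⟨1, map_one _⟩))

variable {V : Type} [AddCommGroup V] [Module ℚ V] {B : BilinForm ℚ V}

/-- The rational bilinear space contains a self-dual lattice over the integers. -/
def HasSelfDualLattice (B : BilinForm ℚ V) : Prop :=
  ∃ L : Submodule ℤ V, Submodule.IsLattice ℚ L ∧ B.dualSubmodule L = L

theorem HasSelfDualLattice.addHyperbolicPlane (h : HasSelfDualLattice B) :
    HasSelfDualLattice (addHyperbolicPlane B) := by
  obtain ⟨L, hL, hL_dual⟩ := h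
  refine ⟨L.prod ((1 : Submodule ℤ ℚ).prod 1),
    isLattice_prod _ _ hL (isLattice_prod _ _ isLattice_one isLattice_one), ?_⟩
  ext ⟨x, a, b⟩
  simp only [mem_dualSubmodule_iff_exists_intCast, Submodule.mem_prod, Submodule.mem_one,
    eq_intCast]
  constructor
  · intro h
    rw [← hL_dual, mem_dualSubmodule_iff_exists_intCast]
    refine ⟨fun y hy => ?_, ?_, ?_⟩
    · simpa using h (y, 0, 0) ⟨hy, ⟨0, by simp⟩, 0, by simp⟩
    · simpa [eq_comm] using h (0, 1, 0) ⟨zero_mem L, ⟨1, by simp⟩, 0, by simp⟩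
    · simpa [eq_comm] using h (0, 0, -1) ⟨zero_mem L, ⟨0, by simp⟩, -1, by simp⟩
  · rintro ⟨hx, ⟨a, rfl⟩, b, rfl⟩ ⟨y, c, d⟩ ⟨hy, ⟨c, rfl⟩, d, rfl⟩
    rw [← hL_dual] at hx
    obtain ⟨k, hk⟩ := mem_dualSubmodule_iff_exists_intCast.1 hx y hy
    exact ⟨k + a * c - b * d, by simp [hk]⟩

theorem exists_add_nsmul_hyperbolicPlane (hB : B.IsSymm) (hL : HasSelfDualLattice B)
    {s : Multiset ℚˣ} (hs : IsDiagonalOn B s ⊤) (m : ℕ) :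
    ∃ (V' : Type) (_ : AddCommGroup V') (_ : Module ℚ V') (B' : BilinForm ℚ V'), B'.IsSymm ∧
      HasSelfDualLattice B' ∧ IsDiagonalOn B' (s + m • hyperbolicPlane ℚ) ⊤ ∧
        ∀ d, HasTotallyIsotropic B' (d + m) → HasTotallyIsotropic B d := by
  induction m with
  | zero => exact ⟨V, _, _, B, hB, hL, by simpa using hs, fun d h => h⟩
  | succ m ih =>
    obtain ⟨V', _, _, B', hB', hL', hs', hd⟩ := ih
    have : FiniteDimensional ℚ V' := have := hs'.finrank_eq_card.2
      Module.Finite.equiv (Submodule.topEquiv (R := ℚ) (M := V'))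
    refine ⟨V' × ℚ × ℚ, inferInstance, inferInstance, addHyperbolicPlane B',
      isSymm_addHyperbolicPlane hB', hL'.addHyperbolicPlane, ?_, fun d h => ?_⟩
    · rw [succ_nsmul, ← add_assoc]
      exact hs'.addHyperbolicPlane hB'
    · exact hd d (HasTotallyIsotropic.of_addHyperbolicPlane h)

end Stabilization

section Anisotropic

variable {K V : Type u} [Field K] [AddCommGroup V] [Module K V] {B : BilinForm K V}

theorem isDiagonalOn_span_image {ι : Type*} {e : ι → V} (he : Pairwise fun i j => B (e i) (e j) = 0)
    {c : ι → Kˣ} (hc : ∀ i, B (e i) (e i) = c i) (t : Finset ι) :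
    IsDiagonalOn B (t.val.map c) (Submodule.span K (e '' t)) := by
  classical
  induction t using Finset.induction_on with
  | empty => simpa using IsDiagonalOn.zero
  | insert i t hi ih =>
    rw [Finset.insert_val_of_notMem hi, Multiset.map_cons, Finset.coe_insert, Set.image_insert_eq,
      Submodule.span_insert]
    refine .cons (hc i) (fun y hy => ?_) ih
    induction hy using Submodule.span_induction with
    | mem y hy =>
      obtain ⟨j, hj, rfl⟩ := hy
      exact he (ne_of_mem_of_not_mem hj hi).symm
    | zero => simp
    | add y z _ _ hy hz => simp [hy, hz]
    | smul a y _ hy => simp [hy]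

theorem exists_isDiagonalOn_of_anisotropic [Invertible (2 : K)] [FiniteDimensional K V]
    (hB : B.IsSymm) (h : ∀ x ≠ 0, B x x ≠ 0) : ∃ s, IsDiagonalOn B s ⊤ := by
  obtain ⟨b, hb⟩ := BilinForm.exists_orthogonal_basis ⟨hB.eq⟩
  have key := isDiagonalOn_span_image (K := K) (fun i j hij => hb hij)
    (c := fun i => Units.mk0 _ (h _ (b.ne_zero i))) (fun i => rfl) Finset.univ
  rw [Finset.coe_univ, Set.image_univ, b.span_eq] at key
  exact ⟨_, key⟩

/-- The factor `ε` lets the lemma apply to positive and to negative values of `B`. -/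
theorem IsDiagonalOn.exists_mul_pos [LinearOrder K] [IsStrictOrderedRing K] (hB : B.IsSymm)
    {s : Multiset Kˣ} {U : Submodule K V} (h : IsDiagonalOn B s U) {ε : K} {x : V} (hx : x ∈ U)
    (hpos : 0 < ε * B x x) : ∃ a ∈ s, 0 < ε * (a : K) := by
  induction h generalizing x with
  | zero => simp [(Submodule.mem_bot K).1 hx] at hpos
  | @cons s U e a he heU _ ih =>
    obtain ⟨_, hy, z, hz, rfl⟩ := Submodule.mem_sup.1 hx
    obtain ⟨c, rfl⟩ := Submodule.mem_span_singleton.1 hy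
    have hze : B z e = 0 := (hB.eq e z).symm.trans (heU z hz)
    have hsum : ε * B (c • e + z) (c • e + z) = c ^ 2 * (ε * a) + ε * B z z := by
      simp [he, heU z hz, hze]
      ring
    by_cases hεz : 0 < ε * B z z
    · obtain ⟨b, hb, hbpos⟩ := ih hz hεz
      exact ⟨b, Multiset.mem_cons_of_mem hb, hbpos⟩
    · refine ⟨a, Multiset.mem_cons_self a s, pos_of_mul_pos_right ?_ (sq_nonneg c)⟩
      linarith

end Anisotropic

theorem abs_sum_sign_lt_card {s : Multiset ℚ} (hpos : ∃ a ∈ s, 0 < a) (hneg : ∃ a ∈ s, a < 0) :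
    |(s.map fun a => (SignType.sign a : ℤ)).sum| < s.card := by
  have hle (a : ℚ) : -1 ≤ (SignType.sign a : ℤ) ∧ (SignType.sign a : ℤ) ≤ 1 := by
    rcases SignType.sign a with _ | _ | _ <;> decide
  have hlower := Multiset.sum_lt_sum (s := s) (f := fun _ => (-1 : ℤ)) (fun a _ => (hle a).1)
    (by obtain ⟨a, ha, ha0⟩ := hpos; exact ⟨a, ha, by simp [sign_pos ha0]⟩)
  have hupper := Multiset.sum_lt_sum (s := s) (g := fun _ => (1 : ℤ)) (fun a _ => (hle a).2)
    (by obtain ⟨a, ha, ha0⟩ := hneg; exact ⟨a, ha, by simp [sign_neg ha0]⟩)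
  simp only [Multiset.map_const', Multiset.sum_replicate, smul_neg, nsmul_one] at hlower hupper
  exact abs_lt.2 ⟨hlower, hupper⟩

section Indefinite

variable {V : Type} [AddCommGroup V] [Module ℚ V] {B : BilinForm ℚ V}

theorem isIsotropicDiag_of_wittMk_eq (hB : B.IsSymm) (hL : HasSelfDualLattice B)
    {s : Multiset ℚˣ} (hs : IsDiagonalOn B s ⊤) {p : ℕ} [hp : Fact p.Prime] {as : Multiset ℤ}
    (has : ∀ a ∈ as, (a : ZMod p) ≠ 0) {us : Multiset (ZMod p)} (hus : ∀ u ∈ us, u ≠ 0)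
    (hus0 : us ≠ 0) (h : wittMk s = (as.map fun a : ℤ => wittClass (a : ℚ)).sum +
      (us.map fun u => wittClass (p * u.val : ℚ)).sum) : IsIsotropicDiag us := by
  obtain ⟨s', hs'⟩ := CanLift.prf (β := Multiset ℚˣ) (as.map ((↑) : ℤ → ℚ)) <| by
    simp only [Multiset.mem_map, forall_exists_index, and_imp, forall_apply_eq_imp_iff₂]
    intro a ha
    refine isUnit_iff_ne_zero.2 (Int.cast_ne_zero.2 ?_)
    rintro rfl
    exact has 0 ha Int.cast_zero
  obtain ⟨t, ht⟩ := CanLift.prf (β := Multiset ℚˣ) (us.map fun u => (p * u.val : ℚ)) <| by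
    simp only [Multiset.mem_map, forall_exists_index, and_imp, forall_apply_eq_imp_iff₂]
    exact fun u hu => isUnit_iff_ne_zero.2 <| mul_ne_zero (Nat.cast_ne_zero.2 hp.out.ne_zero)
      (Nat.cast_ne_zero.2 ((ZMod.val_ne_zero u).2 (hus u hu)))
  have hmk : wittMk s = wittMk (s' + t) := by
    rw [h, map_add, ← sum_map_wittClass s', ← sum_map_wittClass t, hs', ht]
    simp only [Multiset.map_map, Function.comp_def]
  obtain ⟨m, n, hmn⟩ := (AddCon.eq _).1 hmk
  obtain ⟨V', _, _, B', hB', ⟨L, hL, hL_dual⟩, hdiag, -⟩ :=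
    exists_add_nsmul_hyperbolicPlane hB hL hs m
  have hdiag := (hmn V' B' hB' ⊤).1 hdiag
  rw [add_right_comm] at hdiag
  refine hdiag.isIsotropicDiag_of_selfDual hB' hL_dual (as := as + n • {1, -1}) ?_ ?_ hus hus0 ht
  · intro a ha
    rcases Multiset.mem_add.1 ha with ha | ha
    · exact has a ha
    · have ha := Multiset.mem_of_mem_nsmul ha
      simp only [Multiset.insert_eq_cons, Multiset.mem_cons, Multiset.mem_singleton] at ha
      rcases ha with rfl | rfl <;> simp
  · simp [hyperbolicPlane, ← hs', Multiset.map_nsmul]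

theorem wittMk_eq_sum_sign_zsmul (hB : B.IsSymm) (hL : HasSelfDualLattice B) {s : Multiset ℚˣ}
    (hs : IsDiagonalOn B s ⊤) :
    wittMk s = ((s.map Units.val).map fun a => (SignType.sign a : ℤ)).sum •
      wittClass (1 : ℚ) := by
  have hψ := isWittSymbol_wittClass (K := ℚ).prodMk isWittSymbol_sign
  set ψ : ℚ → WittGroup ℚ × ℤ := fun a => (wittClass a, SignType.sign a) with hψ_def
  have hfst (l : Multiset ℚ) : (l.map ψ).sum.1 = (l.map wittClass).sum := by
    rw [← AddMonoidHom.coe_fst, map_multiset_sum, Multiset.map_map]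
    rfl
  have hsnd (l : Multiset ℚ) : (l.map ψ).sum.2 = (l.map fun a => (SignType.sign a : ℤ)).sum := by
    rw [← AddMonoidHom.coe_snd, map_multiset_sum, Multiset.map_map]
    rfl
  obtain ⟨n, hn⟩ := hψ.exists_sum_mem_smoothSubgroup s
  have hmem := hψ.mem_zmultiples_of_isIsotropicDiag hn fun p _ us hus hus0 h => ?_
  · obtain ⟨k, hk⟩ := AddSubgroup.mem_zmultiples_iff.1 hmem
    rw [← sum_map_wittClass, ← hfst, ← hsnd, ← hk]
    simp [hψ_def]
  · have hdiff : ((s.map Units.val).map ψ).sum - ((us.map fun u => (p * u.val : ℚ)).map ψ).sum ∈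
        smoothSubgroup ψ p := by
      rw [← QuotientAddGroup.eq_zero_iff, QuotientAddGroup.mk_sub, h, sub_eq_zero,
        ← QuotientAddGroup.mk'_apply, map_multiset_sum, Multiset.map_map, Multiset.map_map]
      rfl
    obtain ⟨as, has, hsum⟩ := hψ.exists_eq_sum_of_mem_smoothSubgroup hdiff
    refine isIsotropicDiag_of_wittMk_eq hB hL hs (as := as) (fun a ha => ?_) hus hus0 ?_
    · have ha := cast_ne_zero_of_mem_smoothNumbers (p := p) (has a ha)
      rwa [Ne, ZMod.natCast_eq_zero_iff, ← Int.natCast_dvd,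
        ← ZMod.intCast_zmod_eq_zero_iff_dvd] at ha
    · have hsum := hsum.trans (congrArg _ (Multiset.map_map ψ Int.cast as).symm)
      have hfst_eq := congrArg Prod.fst (sub_eq_iff_eq_add.1 hsum)
      rwa [Prod.fst_add, hfst, hfst, hfst, sum_map_wittClass, Multiset.map_map,
        Multiset.map_map] at hfst_eq

/-- The form is Witt equivalent to `|σ|` copies of `⟨1⟩` or of `⟨-1⟩`, where `σ` is its signature,
and `|σ|` is less than its rank. -/
theorem HasSelfDualLattice.exists_isotropic [FiniteDimensional ℚ V] (hL : HasSelfDualLattice B)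
    (hB : B.IsSymm) (hpos : ∃ x, 0 < B x x) (hneg : ∃ x, B x x < 0) : ∃ x ≠ 0, B x x = 0 := by
  by_contra! hB0
  obtain ⟨s, hs⟩ := exists_isDiagonalOn_of_anisotropic hB hB0
  have hsign : |((s.map Units.val).map fun a => (SignType.sign a : ℤ)).sum| < s.card := by
    rw [← Multiset.card_map Units.val s]
    refine abs_sum_sign_lt_card ?_ ?_
    · obtain ⟨x, hx⟩ := hpos
      simpa using hs.exists_mul_pos hB (ε := 1) Submodule.mem_top (by simpa using hx)
    · obtain ⟨x, hx⟩ := hneg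
      simpa using hs.exists_mul_pos hB (ε := -1) Submodule.mem_top (by simpa using hx)
  have hmk := wittMk_eq_sum_sign_zsmul hB hL hs
  generalize ((s.map Units.val).map fun a => (SignType.sign a : ℤ)).sum = k at hsign hmk
  rw [Int.abs_eq_natAbs] at hsign
  obtain ⟨ε, hε⟩ : ∃ ε : ℚˣ, wittMk s = wittMk (Multiset.replicate k.natAbs ε) := by
    have hrep (n : ℕ) (ε : ℚˣ) : wittMk (Multiset.replicate n ε) = n • wittClass (ε : ℚ) := by
      rw [← sum_map_wittClass, Multiset.map_replicate, Multiset.map_replicate,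
        Multiset.sum_replicate]
    obtain h | h := Int.natAbs_eq k
    · exact ⟨1, by rw [hmk, hrep, Units.val_one, ← natCast_zsmul, ← h]⟩
    · refine ⟨-1, ?_⟩
      rw [hmk, hrep, Units.val_neg, Units.val_one, isWittSymbol_wittClass.map_neg, smul_neg,
        ← natCast_zsmul, ← neg_zsmul, ← h]
  obtain ⟨m, n, hmn⟩ := (AddCon.eq _).1 hε
  obtain ⟨V', _, _, B', hB', -, hdiag, hdescend⟩ := exists_add_nsmul_hyperbolicPlane hB hL hs m
  have hdiag' := (hmn V' B' hB' ⊤).1 hdiag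
  have hcard := hdiag.finrank_eq_card.1.symm.trans hdiag'.finrank_eq_card.1
  have : FiniteDimensional ℚ V' := have := hdiag.finrank_eq_card.2
    Module.Finite.equiv (Submodule.topEquiv (R := ℚ) (M := V'))
  obtain ⟨_, U, -, -, -, hU⟩ := IsDiagonalOn.exists_of_add hB' hdiag'
  obtain ⟨W, -, hWn, hW⟩ := hU.exists_totallyIsotropic hB'
  simp only [hyperbolicPlane, Multiset.card_add, Multiset.card_nsmul, Multiset.card_replicate,
    Multiset.card_pair] at hcard
  obtain ⟨x, hx0, hx⟩ := (hdescend 1 ⟨W, by lia, hW⟩).exists_ne_zero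
  exact hB0 x hx0 hx

end Indefinite

/-! ### Odd Lorentzian unimodular lattices -/

/-- A symmetric integral form inducing a surjection onto the dual lattice. -/
structure IsUnimodular {L : Type*} [AddCommGroup L] (B : BilinForm ℤ L) : Prop where
  isSymm : B.IsSymm
  surjective : Function.Surjective B

namespace IsUnimodular

variable {L : Type*} [AddCommGroup L] [Module.Free ℤ L] {B : BilinForm ℤ L}

theorem eq_zero (hB : IsUnimodular B) {x : L} (hx : ∀ y, B x y = 0) : x = 0 := by
  refine (Module.Free.chooseBasis ℤ L).ext_elem fun i => ?_
  obtain ⟨u, hu⟩ := hB.surjective ((Module.Free.chooseBasis ℤ L).coord i)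
  have hux := LinearMap.congr_fun hu x
  rw [hB.isSymm.eq, hx] at hux
  simpa using hux.symm

theorem eq_zero_of_forall_apply_eq_zero {V : Type*} [AddCommGroup V] [Module ℚ V] (ι : L →ₗ[ℤ] V)
    [IsLocalizedModule ℤ⁰ ι] {B' : BilinForm ℚ V} (hB : IsUnimodular B)
    (hι : ∀ x y, B' (ι x) (ι y) = B x y) {v : V} (hv : ∀ y, B' v (ι y) = 0) : v = 0 := by
  obtain ⟨⟨z, d⟩, hz : (d : ℤ) • v = ι z⟩ := IsLocalizedModule.surj ℤ⁰ ι v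
  have hz0 : z = 0 := hB.eq_zero fun y => by
    rw [← Int.cast_inj (α := ℚ), ← hι, ← hz, map_zsmul, LinearMap.smul_apply, hv, smul_zero,
      Int.cast_zero]
  rw [hz0, map_zero, ← Int.cast_smul_eq_zsmul ℚ] at hz
  exact (smul_eq_zero_iff_right (Int.cast_ne_zero.2 (nonZeroDivisors.ne_zero d.2))).1 hz

theorem hasSelfDualLattice {V : Type} [AddCommGroup V] [Module ℚ V] [Module.Finite ℤ L]
    (ι : L →ₗ[ℤ] V) [IsLocalizedModule ℤ⁰ ι] {B' : BilinForm ℚ V} (hB : IsUnimodular B)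
    (hι : ∀ x y, B' (ι x) (ι y) = B x y) : HasSelfDualLattice B' := by
  refine ⟨LinearMap.range ι, ⟨?_, ?_⟩, le_antisymm (fun v hv => ?_) ?_⟩
  · rw [LinearMap.range_eq_map]
    exact Module.Finite.fg_top.map _
  · rw [LinearMap.coe_range, ← Set.image_univ]
    exact span_eq_top_of_isLocalizedModule ℚ ℤ⁰ ι Submodule.span_univ
  · rw [mem_dualSubmodule_iff_exists_intCast] at hv
    choose n hn using fun y : L => hv (ι y) ⟨y, rfl⟩
    have hn_add (y z : L) : n (y + z) = n y + n z := by
      have h := hn (y + z)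
      rw [map_add, map_add, hn, hn] at h
      exact_mod_cast h.symm
    obtain ⟨x, hx⟩ := hB.surjective (AddMonoidHom.mk' n hn_add).toIntLinearMap
    refine ⟨x, sub_eq_zero.1 (hB.eq_zero_of_forall_apply_eq_zero ι hι fun y => ?_)⟩
    rw [map_sub, LinearMap.sub_apply, hι, hn, hx]
    exact sub_self _
  · rintro _ ⟨x, rfl⟩
    rw [mem_dualSubmodule_iff_exists_intCast]
    rintro _ ⟨y, rfl⟩
    exact ⟨B x y, hι x y⟩

theorem exists_isotropic {L : Type} [AddCommGroup L] [Module.Free ℤ L] [Module.Finite ℤ L]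
    {B : BilinForm ℤ L} (hB : IsUnimodular B) (hpos : ∃ x, 0 < B x x) (hneg : ∃ x, B x x < 0) :
    ∃ x ≠ 0, B x x = 0 := by
  let ι : L →ₗ[ℤ] ℚ ⊗[ℤ] L := (TensorProduct.mk ℤ ℚ L 1).toAddMonoidHom.toIntLinearMap
  have : IsLocalizedModule ℤ⁰ ι :=
    IsLocalization.tensorProduct_isLocalizedModule ℤ⁰ ℚ
  have hι (x y : L) : B.baseChange ℚ (ι x) (ι y) = (B x y : ℤ) := by simp [ι]
  have hsymm : (B.baseChange ℚ).IsSymm :=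
    ⟨(BilinForm.IsSymm.baseChange ℚ ⟨hB.isSymm.eq⟩).eq⟩
  obtain ⟨v, hv0, hv⟩ := (hB.hasSelfDualLattice ι hι).exists_isotropic hsymm
    (by obtain ⟨x, hx⟩ := hpos; exact ⟨ι x, by rw [hι]; exact_mod_cast hx⟩)
    (by obtain ⟨x, hx⟩ := hneg; exact ⟨ι x, by rw [hι]; exact_mod_cast hx⟩)
  obtain ⟨⟨z, d⟩, hz : (d : ℤ) • v = ι z⟩ := IsLocalizedModule.surj ℤ⁰ ι v
  refine ⟨z, ?_, ?_⟩
  · rintro rfl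
    rw [map_zero, ← Int.cast_smul_eq_zsmul ℚ] at hz
    exact smul_ne_zero (Int.cast_ne_zero.2 (nonZeroDivisors.ne_zero d.2)) hv0 hz
  · rw [← Int.cast_inj (α := ℚ), ← hι, ← hz, map_zsmul, map_zsmul, LinearMap.smul_apply, hv,
      smul_zero, smul_zero, Int.cast_zero]

end IsUnimodular

/-- A form with exactly one positive square, expressed over `ℤ` by a positive vector and the
reversed Cauchy-Schwarz inequality. -/
structure IsLorentzian {L : Type*} [AddCommGroup L] (B : BilinForm ℤ L) : Prop where
  exists_pos : ∃ x, 0 < B x x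
  mul_le_sq : ∀ x y, 0 < B x x → B x x * B y y ≤ B x y ^ 2

theorem IsLorentzian.of_map {L L' : Type*} [AddCommGroup L] [AddCommGroup L'] {B : BilinForm ℤ L}
    {B' : BilinForm ℤ L'} (hB : IsLorentzian B) (φ : L' →ₗ[ℤ] L) {k : ℤ} (hk : 0 < k)
    (hφ : ∀ x y, B (φ x) (φ y) = k * B' x y) (htwo : ∀ x, (2 : ℤ) • x ∈ LinearMap.range φ) :
    IsLorentzian B' where
  exists_pos := by
    obtain ⟨x, hx⟩ := hB.exists_pos
    obtain ⟨c, hc⟩ := htwo x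
    refine ⟨c, pos_of_mul_pos_right (a := k) ?_ hk.le⟩
    rw [← hφ, hc]
    simpa using hx
  mul_le_sq x y hx := by
    have h := hB.mul_le_sq (φ x) (φ y) (by rw [hφ]; exact mul_pos hk hx)
    rw [hφ, hφ, hφ] at h
    exact le_of_mul_le_mul_left (a := k ^ 2) (by linarith) (pow_pos hk 2)

theorem exists_apply_self_eq_one {L : Type*} [AddCommGroup L] {B : BilinForm ℤ L} (hB : B.IsSymm)
    (hodd : ∃ x, ¬Even (B x x)) {e f : L} (he : B e e = 0) (hef : B e f = 1) :
    ∃ f', B f' f' = 1 ∧ B e f' = 1 := by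
  obtain ⟨f, hef, m, hm⟩ : ∃ f, B e f = 1 ∧ Odd (B f f) := by
    by_cases h : Odd (B f f)
    · exact ⟨f, hef, h⟩
    obtain ⟨t, ht⟩ := hodd
    rw [Int.not_odd_iff_even] at h
    rw [Int.not_even_iff_odd] at ht
    refine ⟨t + (1 - B e t) • f, ?_, ?_⟩
    · rw [map_add, map_smul, hef, smul_eq_mul]
      ring
    · have hexp : B (t + (1 - B e t) • f) (t + (1 - B e t) • f) =
          B t t + ((1 - B e t) ^ 2 * B f f + 2 * ((1 - B e t) * B t f)) := by
        simp only [map_add, map_smul, LinearMap.add_apply, LinearMap.smul_apply, smul_eq_mul,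
          hB.eq f t]
        ring
      rw [hexp]
      exact ht.add_even ((h.mul_left _).add (even_two_mul _))
  refine ⟨f - m • e, ?_, by simp [he, hef]⟩
  simp only [map_sub, map_smul, LinearMap.sub_apply, LinearMap.smul_apply, smul_eq_mul, he, hef,
    hB.eq f e, hm]
  ring

namespace IsUnimodular

section Isotropic

variable {L : Type*} [AddCommGroup L] [Module.Free ℤ L] {B : BilinForm ℤ L}

theorem exists_isotropic_apply_eq_one (hB : IsUnimodular B) {x : L} (hx0 : x ≠ 0)
    (hx : B x x = 0) : ∃ e f, B e e = 0 ∧ B e f = 1 := by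
  obtain ⟨d, hd⟩ := Submodule.IsPrincipal.principal (LinearMap.range (B x))
  have hdvd : ∀ y, ∃ c : ℤ, c * d = B x y := fun y =>
    Submodule.mem_span_singleton.1 (hd ▸ ⟨y, rfl⟩ : B x y ∈ Submodule.span ℤ {d})
  have hd0 : d ≠ 0 := by
    rintro rfl
    exact hx0 (hB.eq_zero fun y => by obtain ⟨c, hc⟩ := hdvd y; rw [← hc, mul_zero])
  choose g hg using hdvd
  obtain ⟨e, he⟩ := hB.surjective
    { toFun := g
      map_add' := fun y z => mul_right_cancel₀ hd0 (by rw [add_mul, hg, hg, hg, map_add])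
      map_smul' := fun c y => mul_right_cancel₀ hd0 (by
        rw [hg, map_smul, ← hg, smul_eq_mul, RingHom.id_apply, smul_eq_mul, mul_assoc]) }
  have heg (y) : B e y = g y := LinearMap.congr_fun he y
  have hde : d • e = x := sub_eq_zero.1 <| hB.eq_zero fun y => by
    rw [map_sub, map_smul, LinearMap.sub_apply, LinearMap.smul_apply, heg, ← hg, smul_eq_mul,
      mul_comm, sub_self]
  obtain ⟨f, hf⟩ : d ∈ LinearMap.range (B x) := hd ▸ Submodule.mem_span_singleton_self d
  refine ⟨e, f, ?_, mul_right_cancel₀ hd0 (by rw [heg, hg, hf, one_mul])⟩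
  simpa [← hde, hd0] using hx

theorem exists_isotropic_of_isLorentzian {L : Type} [AddCommGroup L] [Module.Free ℤ L]
    [Module.Finite ℤ L] {B : BilinForm ℤ L} (hB : IsUnimodular B) (hL : IsLorentzian B)
    (hrank : 2 ≤ Module.finrank ℤ L) : ∃ x, x ≠ 0 ∧ B x x = 0 := by
  obtain ⟨v, hv⟩ := hL.exists_pos
  obtain ⟨y, hvy, hy0⟩ := (LinearMap.ker (B v)).ne_bot_iff.1 fun hker => by
    have := LinearMap.finrank_le_finrank_of_injective (LinearMap.ker_eq_bot.1 hker)
    rw [Module.finrank_self] at this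
    omega
  have hle : B v v * B y y ≤ 0 := by
    simpa [LinearMap.mem_ker.1 hvy] using hL.mul_le_sq v y hv
  rcases (nonpos_of_mul_nonpos_right hle hv).lt_or_eq with hneg | hzero
  · exact hB.exists_isotropic ⟨v, hv⟩ ⟨y, hneg⟩
  · exact ⟨y, hy0, hzero⟩

end Isotropic

end IsUnimodular

/-- The form `x₀y₀ - x₁y₁ - … - xₙyₙ` on `ℤ^(n+1)`. -/
def lorentzForm (n : ℕ) : BilinForm ℤ (Fin (n + 1) → ℤ) :=
  Matrix.toBilin' (Matrix.diagonal fun i => if i = 0 then 1 else -1)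

section Complement

variable {L : Type*} [AddCommGroup L] {B : BilinForm ℤ L} {w : L}

theorem add_apply_smul_mem_ker (hw : B w w = -1) (z : L) :
    z + B w z • w ∈ LinearMap.ker (B w) := by
  simp [hw]

theorem exists_basis_eq_snoc (hw : B w w = -1) {n : ℕ}
    (b : Module.Basis (Fin n) ℤ (LinearMap.ker (B w))) :
    ∃ b' : Module.Basis (Fin (n + 1)) ℤ L, ⇑b' = Fin.snoc ((↑) ∘ b) w := by
  refine ⟨.mkFinSnoc b w (fun c x hx h => ?_) fun z => ⟨_, add_apply_smul_mem_ker hw z⟩,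
    Module.Basis.coe_mkFinSnoc ..⟩
  simpa [hw, LinearMap.mem_ker.1 hx] using congrArg (B w) h

theorem IsUnimodular.restrict_ker (hB : IsUnimodular B) (hw : B w w = -1) :
    IsUnimodular (B.restrict (LinearMap.ker (B w))) where
  isSymm := ⟨fun x y => hB.isSymm.eq x y⟩
  surjective g := by
    let π : L →ₗ[ℤ] LinearMap.ker (B w) :=
      (LinearMap.id + (B w).smulRight w).codRestrict _ (add_apply_smul_mem_ker hw)
    have hπ (y : LinearMap.ker (B w)) : π y = y := Subtype.ext <| by
      change (y : L) + B w y • w = y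
      rw [LinearMap.mem_ker.1 y.2, zero_smul, add_zero]
    have hπw : π w = 0 := Subtype.ext <| by
      change w + B w w • w = 0
      rw [hw, neg_one_smul, add_neg_cancel]
    obtain ⟨u, hu⟩ := hB.surjective (g.comp π)
    have huw : u ∈ LinearMap.ker (B w) := by
      rw [LinearMap.mem_ker, hB.isSymm.eq, hu, LinearMap.comp_apply, hπw, map_zero]
    refine ⟨⟨u, huw⟩, LinearMap.ext fun y => ?_⟩
    change B u y = g y
    rw [hu, LinearMap.comp_apply, hπ]

theorem finrank_ker_add_one [Module.Free ℤ L] [Module.Finite ℤ L] (hw : B w w = -1) :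
    Module.finrank ℤ (LinearMap.ker (B w)) + 1 = Module.finrank ℤ L := by
  obtain ⟨b, -⟩ := exists_basis_eq_snoc hw (Module.finBasis ℤ _)
  rw [Module.finrank_eq_card_basis b, Fintype.card_fin]

theorem IsUnimodular.apply_self_eq_one_of_finrank_eq_one (hB : IsUnimodular B)
    (hpos : ∃ x, 0 < B x x) (b : Module.Basis (Fin 1) ℤ L) : B (b 0) (b 0) = 1 := by
  have hx (x : L) : x = b.repr x 0 • b 0 := by
    conv_lhs => rw [← b.sum_repr x, Fin.sum_univ_one]
  obtain ⟨u, hu⟩ := hB.surjective (b.coord 0)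
  have hunit : b.repr u 0 * B (b 0) (b 0) = 1 := by
    have h := LinearMap.congr_fun hu (b 0)
    rw [hx u, map_smul, LinearMap.smul_apply] at h
    simpa using h
  obtain ⟨v, hv⟩ := hpos
  rw [hx v, map_smul, map_smul, LinearMap.smul_apply, smul_eq_mul, smul_eq_mul] at hv
  rcases Int.isUnit_iff.1 (IsUnit.of_mul_eq_one_right _ hunit) with h | h
  · exact h
  · rw [h] at hv
    nlinarith [sq_nonneg (b.repr v 0)]

end Complement

/-- An isotropic `e` dual to an `f` of norm one gives the vector `f - e` of norm minus one, which
splits off. -/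
theorem IsUnimodular.exists_lorentzian_basis (n : ℕ) : ∀ {L : Type} [AddCommGroup L]
    [Module.Free ℤ L] [Module.Finite ℤ L] {B : BilinForm ℤ L}, IsUnimodular B → IsLorentzian B →
    (∃ x, ¬Even (B x x)) → Module.finrank ℤ L = n + 1 →
    ∃ b : Module.Basis (Fin (n + 1)) ℤ L,
      LinearMap.BilinForm.toMatrix b B = Matrix.diagonal fun i => if i = 0 then 1 else -1 := by
  induction n with
  | zero =>
    intro L _ _ _ B hB hL _ hrank
    refine ⟨Module.finBasisOfFinrankEq ℤ L hrank, ?_⟩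
    ext i j
    obtain rfl := Fin.fin_one_eq_zero i
    obtain rfl := Fin.fin_one_eq_zero j
    rw [LinearMap.BilinForm.toMatrix_apply]
    exact hB.apply_self_eq_one_of_finrank_eq_one hL.exists_pos _
  | succ n ih =>
    intro L _ _ _ B hB hL hodd hrank
    obtain ⟨x, hx0, hx⟩ := hB.exists_isotropic_of_isLorentzian hL (by omega)
    obtain ⟨e, f, he, hef⟩ := hB.exists_isotropic_apply_eq_one hx0 hx
    obtain ⟨f, hf, hef⟩ := exists_apply_self_eq_one hB.isSymm hodd he hef
    have hfe : B f e = 1 := by rw [hB.isSymm.eq, hef]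
    obtain ⟨w, hw⟩ : ∃ w, w = f - e := ⟨_, rfl⟩
    have hww : B w w = -1 := by simp [hw, he, hf, hef, hfe]
    have hfw : f ∈ LinearMap.ker (B w) := by simp [hw, hf, hef]
    obtain ⟨b, hb⟩ := ih (hB.restrict_ker hww)
      ⟨⟨⟨f, hfw⟩, hf ▸ one_pos⟩, fun x y => hL.mul_le_sq x y⟩
      ⟨⟨f, hfw⟩, fun h => Int.not_even_one (hf ▸ h)⟩
      (Nat.add_right_cancel ((finrank_ker_add_one hww).trans hrank))
    obtain ⟨b', hb'⟩ := exists_basis_eq_snoc hww b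
    refine ⟨b', ?_⟩
    have hbb (i j) : B (b i) (b j) = diagonal (fun i => if i = 0 then 1 else -1) i j := by
      rw [← hb, LinearMap.BilinForm.toMatrix_apply]
      rfl
    have hbw (i) : B w (b i) = 0 := (b i).2
    have hwb (i) : B (b i) w = 0 := by rw [hB.isSymm.eq, hbw]
    have hlast (i : Fin (n + 1)) : Fin.last (n + 1) ≠ i.castSucc := i.castSucc_ne_last.symm
    ext i j
    rw [LinearMap.BilinForm.toMatrix_apply, hb']
    cases i using Fin.lastCases <;> cases j using Fin.lastCases <;>
      simp [hww, hbw, hwb, hbb, hlast, Matrix.diagonal_apply]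

theorem IsUnimodular.exists_linearEquiv_lorentzForm {n : ℕ} {L : Type} [AddCommGroup L]
    [Module.Free ℤ L] [Module.Finite ℤ L] {B : BilinForm ℤ L} (hB : IsUnimodular B)
    (hL : IsLorentzian B) (hodd : ∃ x, ¬Even (B x x)) (hrank : Module.finrank ℤ L = n + 1) :
    ∃ e : L ≃ₗ[ℤ] (Fin (n + 1) → ℤ), ∀ x y, lorentzForm n (e x) (e y) = B x y := by
  obtain ⟨b, hb⟩ := hB.exists_lorentzian_basis n hL hodd hrank
  refine ⟨b.equivFun, fun x y => ?_⟩
  rw [lorentzForm, ← hb, Matrix.toBilin'_apply', b.equivFun_apply, b.equivFun_apply,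
    ← LinearMap.BilinForm.apply_eq_dotProduct_toMatrix_mulVec]

/-! ### 2-elementary lattices and doubly even codes -/

section EvenForms

variable {L : Type*} [AddCommGroup L]

theorem exists_eq_two_smul_of_forall_dual_even [Module.Free ℤ L] {x : L}
    (h : ∀ f : Module.Dual ℤ L, Even (f x)) : ∃ y, x = (2 : ℤ) • y := by
  let b := Module.Free.chooseBasis ℤ L
  refine ⟨b.repr.symm ((b.repr x).mapRange (· / 2) (Int.zero_ediv 2)), b.ext_elem fun i => ?_⟩
  rw [map_smul, LinearEquiv.apply_symm_apply, Finsupp.smul_apply, Finsupp.mapRange_apply,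
    smul_eq_mul]
  exact (Int.mul_ediv_cancel' (h (b.coord i)).two_dvd).symm

variable {C : BilinForm ℤ L}

theorem even_apply_self_of_span_eq_top (hC : C.IsSymm) {s : Set L}
    (hs : Submodule.span ℤ s = ⊤) (h : ∀ x ∈ s, Even (C x x)) (x : L) : Even (C x x) := by
  have hx : x ∈ Submodule.span ℤ s := hs ▸ Submodule.mem_top
  induction hx using Submodule.span_induction with
  | mem x hx => exact h x hx
  | zero => simp
  | add x y _ _ hx hy =>
    have hxy : C (x + y) (x + y) = C x x + C y y + 2 * C x y := by
      simp only [map_add, LinearMap.add_apply, hC.eq y x]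
      ring
    exact hxy ▸ (hx.add hy).add (even_two_mul _)
  | smul c x _ hx => simpa using (hx.mul_left c).mul_left c

theorem even_apply_of_four_dvd (hC : C.IsSymm) {x y : L} (hx : 4 ∣ C x x) (hy : 4 ∣ C y y)
    (hxy : 4 ∣ C (x + y) (x + y)) : Even (C x y) := by
  simp only [map_add, LinearMap.add_apply, hC.eq y x] at hxy
  rw [even_iff_two_dvd]
  omega

theorem exists_eq_two_smul_of_forall_even (h : ∀ x y, Even (C x y)) :
    ∃ K : BilinForm ℤ L, C = (2 : ℤ) • K := by
  have hdiv (x y : L) : 2 * (C x y / 2) = C x y := Int.mul_ediv_cancel' (h x y).two_dvd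
  refine ⟨LinearMap.mk₂ ℤ (fun x y => C x y / 2) ?_ ?_ ?_ ?_, ?_⟩
  · intro x x' y
    refine mul_left_cancel₀ two_ne_zero ?_
    rw [mul_add, hdiv, hdiv, hdiv, map_add, LinearMap.add_apply]
  · intro c x y
    refine mul_left_cancel₀ two_ne_zero ?_
    rw [smul_eq_mul, mul_left_comm, hdiv, hdiv, map_smul, LinearMap.smul_apply, smul_eq_mul]
  · intro x y y'
    refine mul_left_cancel₀ two_ne_zero ?_
    rw [mul_add, hdiv, hdiv, hdiv, map_add]
  · intro c x y
    refine mul_left_cancel₀ two_ne_zero ?_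
    rw [smul_eq_mul, mul_left_comm, hdiv, hdiv, map_smul, smul_eq_mul]
  · ext x y
    exact (hdiv x y).symm

theorem exists_submodule_mem_iff_forall_even [IsNoetherian ℤ L] (hC : C.IsSymm)
    (heven : ∀ x, Even (C x x)) (x₀ : L) :
    ∃ T : Submodule ℤ L, x₀ ∈ T ∧ ∀ y, y ∈ T ↔ ∀ x ∈ T, Even (C x y) := by
  let S : Set (Submodule ℤ L) := {T | x₀ ∈ T ∧ ∀ x ∈ T, ∀ y ∈ T, Even (C x y)}
  have hne : S.Nonempty := by
    refine ⟨Submodule.span ℤ {x₀}, Submodule.mem_span_singleton_self _, fun x hx y hy => ?_⟩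
    obtain ⟨c, rfl⟩ := Submodule.mem_span_singleton.1 hx
    obtain ⟨d, rfl⟩ := Submodule.mem_span_singleton.1 hy
    simpa using ((heven x₀).mul_left _).mul_left _
  obtain ⟨T, hT, hmax⟩ := set_has_maximal_iff_noetherian.2 inferInstance S hne
  refine ⟨T, hT.1, fun y => ⟨fun hy x hx => hT.2 x hx y hy, fun hy => ?_⟩⟩
  by_contra hyT
  refine hmax (T ⊔ Submodule.span ℤ {y}) ⟨Submodule.mem_sup_left hT.1, fun u hu v hv => ?_⟩
    (lt_of_le_of_ne le_sup_left fun h => hyT (h ▸ Submodule.mem_sup_right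
      (Submodule.mem_span_singleton_self y)))
  obtain ⟨u, huT, _, hy₁, rfl⟩ := Submodule.mem_sup.1 hu
  obtain ⟨v, hvT, _, hy₂, rfl⟩ := Submodule.mem_sup.1 hv
  obtain ⟨c, rfl⟩ := Submodule.mem_span_singleton.1 hy₁
  obtain ⟨d, rfl⟩ := Submodule.mem_span_singleton.1 hy₂
  simp only [map_add, map_smul, LinearMap.add_apply, LinearMap.smul_apply, smul_eq_mul, hC.eq y v]
  exact ((hT.2 u huT v hvT).add ((hy v hvT).mul_left _)).add
    (((hy u huT).add ((heven y).mul_left _)).mul_left _)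

/-- The form of an even lattice whose discriminant group is killed by two: twice every functional
is represented by a vector. -/
structure IsEvenTwoElementary (C : BilinForm ℤ L) : Prop where
  isSymm : C.IsSymm
  even : ∀ x, Even (C x x)
  exists_eq_two_smul : ∀ f : Module.Dual ℤ L, ∃ x, C x = (2 : ℤ) • f

/-- The condition `δ = 0` on a 2-elementary form, in terms of the lattice itself: the vectors `x`
with even products are those for which `x/2` lies in the dual lattice, and `x/2` then has
integral norm. -/
def IsDeltaZero (C : BilinForm ℤ L) : Prop :=
  ∀ x, (∀ y, Even (C x y)) → 4 ∣ C x x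

theorem IsEvenTwoElementary.isUnimodular [Module.Free ℤ L] (hC : IsEvenTwoElementary C)
    {T : Submodule ℤ L} (hT : ∀ y, y ∈ T ↔ ∀ x ∈ T, Even (C x y)) {K : BilinForm ℤ T}
    (hK : ∀ x y : T, C x y = 2 * K x y) : IsUnimodular K where
  isSymm := ⟨fun x y => mul_left_cancel₀ two_ne_zero <|
    (hK x y).symm.trans ((hC.isSymm.eq _ _).trans (hK y x))⟩
  surjective f := by
    have htwo (y : L) : (2 : ℤ) • y ∈ T := (hT _).2 fun x _ => by simp
    obtain ⟨x, hx⟩ := hC.exists_eq_two_smul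
      (f.comp (((2 : ℤ) • LinearMap.id).codRestrict T htwo))
    have hxT (y : T) : C x y = 2 * (2 * f y) := by
      rw [hx]
      change 2 * f ⟨(2 : ℤ) • (y : L), _⟩ = _
      rw [← smul_eq_mul (2 : ℤ) (f y), ← map_smul]
      rfl
    obtain ⟨t, rfl⟩ := exists_eq_two_smul_of_forall_dual_even (x := x) fun h => by
      obtain ⟨y, hy⟩ := hC.exists_eq_two_smul h
      have hyT : y ∈ T := (hT y).2 fun z _ => by simp [hC.isSymm.eq z y, hy]
      have hxy : 2 * h x = 2 * (2 * f ⟨y, hyT⟩) := by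
        rw [← hxT, hC.isSymm.eq, hy, LinearMap.smul_apply, smul_eq_mul]
      exact (mul_left_cancel₀ two_ne_zero hxy) ▸ even_two_mul _
    have htT (y : T) : C t y = 2 * f y := by
      refine mul_left_cancel₀ two_ne_zero (Eq.trans ?_ (hxT y))
      rw [map_smul, LinearMap.smul_apply, smul_eq_mul]
    have ht : t ∈ T := (hT t).2 fun y hy => by simp [hC.isSymm.eq y t, htT ⟨y, hy⟩]
    refine ⟨⟨t, ht⟩, LinearMap.ext fun y => mul_left_cancel₀ two_ne_zero ?_⟩
    rw [← hK, htT]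

theorem finrank_eq_of_two_smul_mem [Module.Free ℤ L] [Module.Finite ℤ L] {T : Submodule ℤ L}
    (hT : ∀ x, (2 : ℤ) • x ∈ T) : Module.finrank ℤ T = Module.finrank ℤ L := by
  refine le_antisymm (Submodule.finrank_le T)
    (LinearMap.finrank_le_finrank_of_injective
      (f := ((2 : ℤ) • LinearMap.id).codRestrict T hT) fun x y h => ?_)
  exact smul_right_injective L (two_ne_zero (α := ℤ)) (congrArg Subtype.val h)

end EvenForms

namespace IsUnimodular

variable {L : Type*} [AddCommGroup L] [Module.Free ℤ L] {B : BilinForm ℤ L}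

theorem exists_eq_two_smul (hB : IsUnimodular B) {x : L} (h : ∀ y, Even (B x y)) :
    ∃ y, x = (2 : ℤ) • y := by
  refine exists_eq_two_smul_of_forall_dual_even fun f => ?_
  obtain ⟨y, rfl⟩ := hB.surjective f
  exact hB.isSymm.eq y x ▸ h y

theorem exists_odd_apply (hB : IsUnimodular B) {W : Submodule ℤ L}
    (hW : ∀ u, (2 : ℤ) • u ∈ W) {x : L} (hx : x ∉ W) :
    ∃ z, Odd (B z x) ∧ ∀ w ∈ W, Even (B z w) := by
  let : Module (ZMod 2) (L ⧸ W) := AddCommGroup.zmodModule fun v => by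
    induction v using Submodule.Quotient.induction_on with
    | _ v => exact_mod_cast (Submodule.Quotient.mk_eq_zero W).2 (hW v)
  obtain ⟨g, hg⟩ : ∃ g : Module.Dual (ZMod 2) (L ⧸ W), g (W.mkQ x) ≠ 0 := by
    by_contra! h
    exact hx ((Submodule.Quotient.mk_eq_zero W).1 ((Module.forall_dual_apply_eq_zero_iff _ _).1 h))
  obtain ⟨f, hf⟩ := Module.projective_lifting_property (Int.castAddHom (ZMod 2)).toIntLinearMap
    (g.toAddMonoidHom.toIntLinearMap.comp W.mkQ) ZMod.intCast_surjective
  obtain ⟨z, rfl⟩ := hB.surjective f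
  have heven (v : L) : Even (B z v) ↔ g (W.mkQ v) = 0 := by
    rw [even_iff_two_dvd]
    have h : ((B z v : ℤ) : ZMod 2) = g (W.mkQ v) := LinearMap.congr_fun hf v
    rw [← h]
    exact_mod_cast (ZMod.intCast_zmod_eq_zero_iff_dvd (B z v) 2).symm
  refine ⟨z, Int.not_even_iff_odd.1 (mt (heven x).1 hg), fun w hw => (heven w).2 ?_⟩
  rw [Submodule.mkQ_apply, (Submodule.Quotient.mk_eq_zero W).2 hw, map_zero]

end IsUnimodular

theorem exists_isOrthogonal_apply_eq_add {L : Type*} [AddCommGroup L] {B : BilinForm ℤ L}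
    (hB : B.IsSymm) {w : L} (hw : B w w = -2) :
    ∃ S : L ≃ₗ[ℤ] L, B.IsOrthogonal S ∧ ∀ x, S x = x + B w x • w := by
  have hrefl : B.IsReflective w := .of_dvd_two B (by rw [hw]; decide)
  refine ⟨_, hrefl.isOrthogonal_reflection B ⟨fun x y => hB.eq x y⟩, fun x => ?_⟩
  have hcoroot : hrefl.coroot B x = -B w x := by
    have h := hrefl.apply_self_mul_coroot_apply B (y := x)
    rw [hw] at h
    linarith
  rw [Module.reflection_apply, hcoroot, neg_smul, sub_neg_eq_add]

section LorentzForm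

variable {n : ℕ}

theorem lorentzForm_apply (x y : Fin (n + 1) → ℤ) :
    lorentzForm n x y = x 0 * y 0 - ∑ i : Fin n, x i.succ * y i.succ := by
  rw [lorentzForm, Matrix.toBilin'_apply']
  simp only [dotProduct, mulVec_diagonal, Fin.sum_univ_succ]
  simp [sub_eq_add_neg]

theorem isUnimodular_lorentzForm (n : ℕ) : IsUnimodular (lorentzForm n) where
  isSymm := ⟨fun x y => by simp [lorentzForm_apply, mul_comm]⟩
  surjective f := by
    refine ⟨fun i => (if i = 0 then 1 else -1) * f (Pi.single i 1), LinearMap.pi_ext' fun i => ?_⟩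
    ext
    rw [lorentzForm, LinearMap.comp_apply, Matrix.toBilin'_apply']
    simp only [mulVec_diagonal, dotProduct]
    refine (Finset.sum_eq_single i (fun j _ hj => ?_) (by simp)).trans ?_
    · simp [hj]
    · split_ifs <;> simp

theorem even_lorentzForm_self_sub_one (x : Fin (n + 1) → ℤ) :
    Even (lorentzForm n x x - lorentzForm n x 1) := by
  have h : lorentzForm n x x - lorentzForm n x 1 =
      x 0 * (x 0 - 1) - ∑ i : Fin n, x i.succ * (x i.succ - 1) := by
    simp only [lorentzForm_apply, Pi.one_apply, mul_one, mul_sub, Finset.sum_sub_distrib]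
    ring
  exact h ▸ (Int.even_mul_pred_self _).sub (Finset.even_sum _ fun i _ => Int.even_mul_pred_self _)

theorem even_lorentzForm_one_iff (x : Fin (n + 1) → ℤ) :
    Even (lorentzForm n x 1) ↔ Even (lorentzForm n x x) :=
  (Int.even_sub.1 (even_lorentzForm_self_sub_one x)).symm

theorem exists_odd_zero_add_succ {p : Fin (n + 1) → ℤ} (hp : 4 ∣ lorentzForm n p p - 2)
    (hodd : ∃ i, Even (p i)) : ∃ j : Fin n, Odd (p 0 + p j.succ) := by
  by_contra! h
  simp only [Int.not_odd_iff_even, Int.even_add] at h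
  obtain ⟨i, hi⟩ := hodd
  have h0 : Even (p 0) := by
    cases i using Fin.cases with
    | zero => exact hi
    | succ j => exact (h j).2 hi
  obtain ⟨u, hu⟩ : ∃ u, p = (2 : ℤ) • u := by
    choose u hu using fun i => (Fin.cases h0 (fun j => (h j).1 h0) i : Even (p i)).two_dvd
    exact ⟨u, funext hu⟩
  simp only [hu, map_smul, LinearMap.smul_apply, smul_eq_mul] at hp
  omega

theorem sum_update_mul_self {ι : Type*} [Fintype ι] [DecidableEq ι] (o : ι → ℤ) (j : ι) (v : ℤ) :
    ∑ i, Function.update o j v i * Function.update o j v i =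
      ∑ i, o i * o i - o j * o j + v * v := by
  rw [← Finset.add_sum_erase _ _ (Finset.mem_univ j),
    ← Finset.add_sum_erase _ (fun i => o i * o i) (Finset.mem_univ j), Function.update_self,
    Finset.sum_congr rfl fun i hi => by
      rw [Function.update_of_ne (Finset.ne_of_mem_erase hi)]]
  ring

theorem four_dvd_sum_mul_self_sub_sum_emod_two {ι : Type*} [Fintype ι] (p : ι → ℤ) :
    4 ∣ ∑ i, p i * p i - ∑ i, p i % 2 * (p i % 2) := by
  rw [← Finset.sum_sub_distrib]
  refine Finset.dvd_sum fun i _ => ⟨p i / 2 * (p i / 2) + p i % 2 * (p i / 2), ?_⟩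
  nth_rw 1 2 [← Int.emod_add_mul_ediv (p i) 2]
  ring

/-- Reduce the spatial coordinates of `p` to `0` and `1`, and replace the time coordinate by `a` and
the `j`-th spatial one by `a - 1`; the norm is then linear in `a`. -/
theorem exists_lorentzForm_self_eq_neg_two {p : Fin (n + 1) → ℤ}
    (hp : 4 ∣ lorentzForm n p p - 2) (heven : ∃ i, Even (p i)) :
    ∃ u, lorentzForm n (p + (2 : ℤ) • u) (p + (2 : ℤ) • u) = -2 := by
  obtain ⟨j, hj⟩ := exists_odd_zero_add_succ hp heven
  suffices h : ∃ w, lorentzForm n w w = -2 ∧ ∀ i, 2 ∣ w i - p i by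
    obtain ⟨w, hw, hwp⟩ := h
    choose u hu using hwp
    have hwu : p + (2 : ℤ) • u = w := funext fun i =>
      (congrArg (p i + ·) (hu i).symm).trans (add_sub_cancel _ _)
    exact ⟨u, hwu ▸ hw⟩
  obtain ⟨o, ho⟩ : ∃ o : Fin n → ℤ, ∀ i, o i = p i.succ % 2 := ⟨_, fun _ => rfl⟩
  have hoj : o j * o j = o j := by
    rcases Int.emod_two_eq_zero_or_one (p j.succ) with h | h <;> simp [ho, h]
  have hsum : 4 ∣ ∑ i : Fin n, p i.succ * p i.succ - ∑ i, o i * o i := by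
    simpa only [ho] using four_dvd_sum_mul_self_sub_sum_emod_two fun i : Fin n => p i.succ
  obtain ⟨a, ha, hap⟩ : ∃ a, 2 * a = ∑ i, o i * o i - o j - 1 ∧ 2 ∣ a - p 0 := by
    rw [lorentzForm_apply] at hp
    have hoj := ho j
    rcases Int.even_or_odd' (p 0) with ⟨c, hc | hc⟩
    · have hc2 : p 0 * p 0 = 4 * (c * c) := by rw [hc]; ring
      rw [Int.odd_iff] at hj
      exact ⟨(∑ i, o i * o i - o j - 1) / 2, by omega, by omega⟩
    · have hc2 : p 0 * p 0 = 4 * (c * c + c) + 1 := by rw [hc]; ring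
      rw [Int.odd_iff] at hj
      exact ⟨(∑ i, o i * o i - o j - 1) / 2, by omega, by omega⟩
  refine ⟨Fin.cons a (Function.update o j (a - 1)), ?_, Fin.cases hap fun i => ?_⟩
  · simp only [lorentzForm_apply, Fin.cons_zero, Fin.cons_succ, sum_update_mul_self, hoj]
    linear_combination ha
  · rw [Fin.cons_succ]
    rcases eq_or_ne i j with rfl | hij
    · rw [Function.update_self]
      rw [Int.odd_iff] at hj
      omega
    · rw [Function.update_of_ne hij, ho]
      omega

end LorentzForm

theorem mem_sup_span_singleton_iff {L : Type*} [AddCommGroup L] {W : Submodule ℤ L}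
    (hW : ∀ u, (2 : ℤ) • u ∈ W) {v t : L} :
    v ∈ W ⊔ Submodule.span ℤ {t} ↔ v ∈ W ∨ v - t ∈ W := by
  constructor
  · intro h
    obtain ⟨w, hw, _, ht, rfl⟩ := Submodule.mem_sup.1 h
    obtain ⟨b, rfl⟩ := Submodule.mem_span_singleton.1 ht
    rcases Int.even_or_odd' b with ⟨k, rfl | rfl⟩
    · exact .inl (W.add_mem hw (mul_smul 2 k t ▸ hW _))
    · refine .inr ?_
      rw [add_smul, one_smul, mul_smul, ← add_assoc, add_sub_cancel_right]
      exact W.add_mem hw (hW _)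
  · rintro (h | h)
    · exact Submodule.mem_sup_left h
    · exact sub_add_cancel v t ▸ Submodule.add_mem_sup h (Submodule.mem_span_singleton_self t)

section Isometries

variable {n : ℕ} {x y : Fin (n + 1) → ℤ}

/-- Modulo `2`, the reflection in a vector of norm `-2` congruent to `x + y` is the transvection
along `x + y`. -/
theorem exists_isOrthogonal_of_odd (hx : 4 ∣ lorentzForm n x x) (hy : 4 ∣ lorentzForm n y y)
    (hxy : Odd (lorentzForm n x y)) :
    ∃ S : (Fin (n + 1) → ℤ) ≃ₗ[ℤ] (Fin (n + 1) → ℤ), (lorentzForm n).IsOrthogonal S ∧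
      (∃ u, S x = y + (2 : ℤ) • u) ∧
      ∀ d, Even (lorentzForm n x d) → Even (lorentzForm n y d) → ∃ u, S d = d + (2 : ℤ) • u := by
  have hB := (isUnimodular_lorentzForm n).isSymm
  have hxx : Even (lorentzForm n x x) := even_iff_two_dvd.2 (dvd_trans (by decide) hx)
  have hsum : Odd (lorentzForm n (x + y) x) := by
    rw [map_add, LinearMap.add_apply, hB.eq y x]
    exact hxx.add_odd hxy
  have hnorm : 4 ∣ lorentzForm n (x + y) (x + y) - 2 := by
    obtain ⟨k, hk⟩ := hxy
    simp only [map_add, LinearMap.add_apply, hB.eq y x, hk]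
    omega
  have heven : ∃ i, Even ((x + y) i) := by
    by_contra! h
    choose u hu using fun i => Int.not_even_iff_odd.1 (h i)
    have hu1 : x + y = (2 : ℤ) • u + 1 := funext hu
    rw [hu1, map_add, LinearMap.add_apply, hB.eq 1 x, map_smul, LinearMap.smul_apply] at hsum
    exact Int.not_even_iff_odd.2 hsum
      ((even_two_mul _).add ((even_lorentzForm_one_iff x).2 hxx))
  obtain ⟨u, hu⟩ := exists_lorentzForm_self_eq_neg_two hnorm heven
  obtain ⟨S, hS, hSd⟩ := exists_isOrthogonal_apply_eq_add hB hu
  have hform (d) : lorentzForm n (x + y + (2 : ℤ) • u) d =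
      lorentzForm n (x + y) d + 2 * lorentzForm n u d := by
    rw [map_add, map_smul, LinearMap.add_apply, LinearMap.smul_apply, smul_eq_mul]
  refine ⟨S, hS, ?_, fun d hxd hyd => ?_⟩
  · obtain ⟨k, hk⟩ := hsum
    refine ⟨x + u + (k + lorentzForm n u x) • (x + y + (2 : ℤ) • u), ?_⟩
    rw [hSd, hform, hk]
    module
  · obtain ⟨k, hk⟩ : Even (lorentzForm n (x + y) d) := by
      rw [map_add, LinearMap.add_apply]
      exact hxd.add hyd
    refine ⟨(k + lorentzForm n u d) • (x + y + (2 : ℤ) • u), ?_⟩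
    rw [hSd, hform, hk]
    module

variable {D : Submodule ℤ (Fin (n + 1) → ℤ)}

/-- Evenness against the characteristic vector `1` makes the norm of `z` even; if it is not
divisible by four, that of `z + x` is. -/
theorem exists_four_dvd_odd_odd (hD : ∀ u, (2 : ℤ) • u ∈ D) (hx : 4 ∣ lorentzForm n x x)
    (hxy : Even (lorentzForm n x y)) (hxD : ∀ d ∈ D, Even (lorentzForm n x d))
    (h1x : x ∉ D ⊔ Submodule.span ℤ {1}) (h1y : y ∉ D ⊔ Submodule.span ℤ {1}) :
    ∃ z, 4 ∣ lorentzForm n z z ∧ Odd (lorentzForm n x z) ∧ Odd (lorentzForm n z y) ∧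
      ∀ d ∈ D, Even (lorentzForm n z d) := by
  have hB := isUnimodular_lorentzForm n
  have hxW : x ∉ D ⊔ Submodule.span ℤ {1} ⊔ Submodule.span ℤ {x + y} := by
    rw [mem_sup_span_singleton_iff fun u => Submodule.mem_sup_left (hD u), sub_add_cancel_left,
      neg_mem_iff]
    exact not_or.2 ⟨h1x, h1y⟩
  obtain ⟨z, hzx, hzW⟩ := hB.exists_odd_apply
    (fun u => Submodule.mem_sup_left (Submodule.mem_sup_left (hD u))) hxW
  have hzD (d) (hd : d ∈ D) : Even (lorentzForm n z d) :=
    hzW d (Submodule.mem_sup_left (Submodule.mem_sup_left hd))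
  have hzz : Even (lorentzForm n z z) := (even_lorentzForm_one_iff z).1 <| hzW 1 <|
    Submodule.mem_sup_left (Submodule.mem_sup_right (Submodule.mem_span_singleton_self 1))
  have hzy : Odd (lorentzForm n z y) := by
    have h := hzW (x + y) (Submodule.mem_sup_right (Submodule.mem_span_singleton_self _))
    rw [map_add] at h
    exact (Int.even_add'.1 h).1 hzx
  by_cases h4 : 4 ∣ lorentzForm n z z
  · exact ⟨z, h4, hB.isSymm.eq z x ▸ hzx, hzy, hzD⟩
  refine ⟨z + x, ?_, ?_, ?_, fun d hd => ?_⟩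
  · obtain ⟨k, hk⟩ := hzx
    obtain ⟨m, hm⟩ := hzz
    simp only [map_add, LinearMap.add_apply, hB.isSymm.eq x z, hk]
    omega
  · rw [map_add, hB.isSymm.eq x z]
    exact hzx.add_even (even_iff_two_dvd.2 (dvd_trans (by decide) hx))
  · rw [map_add, LinearMap.add_apply]
    exact hzy.add_even hxy
  · rw [map_add, LinearMap.add_apply]
    exact (hzD d hd).add (hxD d hd)

theorem exists_isOrthogonal_of_notMem (hD : ∀ u, (2 : ℤ) • u ∈ D) (hx : 4 ∣ lorentzForm n x x)
    (hy : 4 ∣ lorentzForm n y y) (hxD : ∀ d ∈ D, Even (lorentzForm n x d))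
    (hyD : ∀ d ∈ D, Even (lorentzForm n y d)) (h1x : x ∉ D ⊔ Submodule.span ℤ {1})
    (h1y : y ∉ D ⊔ Submodule.span ℤ {1}) :
    ∃ S : (Fin (n + 1) → ℤ) ≃ₗ[ℤ] (Fin (n + 1) → ℤ), (lorentzForm n).IsOrthogonal S ∧
      (∃ u, S x = y + (2 : ℤ) • u) ∧ ∀ d ∈ D, ∃ u, S d = d + (2 : ℤ) • u := by
  rcases Int.even_or_odd (lorentzForm n x y) with hxy | hxy
  swap
  · obtain ⟨S, hS, hSx, hSd⟩ := exists_isOrthogonal_of_odd hx hy hxy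
    exact ⟨S, hS, hSx, fun d hd => hSd d (hxD d hd) (hyD d hd)⟩
  obtain ⟨z, hz, hxz, hzy, hzD⟩ := exists_four_dvd_odd_odd hD hx hxy hxD h1x h1y
  obtain ⟨S, hS, ⟨u, hu⟩, hSd⟩ := exists_isOrthogonal_of_odd hx hz hxz
  obtain ⟨T, hT, ⟨v, hv⟩, hTd⟩ := exists_isOrthogonal_of_odd hz hy hzy
  refine ⟨S.trans T, fun a b => (hT _ _).trans (hS a b), ⟨v + T u, ?_⟩, fun d hd => ?_⟩
  · rw [LinearEquiv.trans_apply, hu, map_add, map_smul, hv]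
    module
  · obtain ⟨a, ha⟩ := hSd d (hxD d hd) (hzD d hd)
    obtain ⟨b, hb⟩ := hTd d (hzD d hd) (hyD d hd)
    refine ⟨b + T a, ?_⟩
    rw [LinearEquiv.trans_apply, ha, map_add, map_smul, hb]
    module

theorem exists_apply_one_eq {S : (Fin (n + 1) → ℤ) ≃ₗ[ℤ] (Fin (n + 1) → ℤ)}
    (hS : (lorentzForm n).IsOrthogonal S) : ∃ u, S 1 = 1 + (2 : ℤ) • u := by
  have hB := isUnimodular_lorentzForm n
  obtain ⟨u, hu⟩ := hB.exists_eq_two_smul (x := S 1 - 1) fun z => by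
    obtain ⟨z, rfl⟩ := S.surjective z
    rw [map_sub, LinearMap.sub_apply, hS, hB.isSymm.eq 1 z, hB.isSymm.eq 1 (S z), Int.even_sub,
      even_lorentzForm_one_iff, even_lorentzForm_one_iff, hS]
  exact ⟨u, by rw [← hu, add_sub_cancel]⟩

end Isometries

/-- A sublattice of `ℤ^(n+1)` obtained by Construction A from a doubly even code: it contains
`2 ℤ^(n+1)`, and its norms are divisible by four. -/
structure IsDoublyEvenCode {n : ℕ} (Λ : Submodule ℤ (Fin (n + 1) → ℤ)) : Prop where
  two_smul_mem : ∀ u, (2 : ℤ) • u ∈ Λ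
  four_dvd : ∀ x ∈ Λ, 4 ∣ lorentzForm n x x

namespace IsDoublyEvenCode

variable {n : ℕ} {Λ Λ' : Submodule ℤ (Fin (n + 1) → ℤ)}

theorem even (hΛ : IsDoublyEvenCode Λ) {x y : Fin (n + 1) → ℤ} (hx : x ∈ Λ) (hy : y ∈ Λ) :
    Even (lorentzForm n x y) :=
  even_apply_of_four_dvd (isUnimodular_lorentzForm n).isSymm (hΛ.four_dvd x hx) (hΛ.four_dvd y hy)
    (hΛ.four_dvd _ (Λ.add_mem hx hy))

theorem add_two_smul_mem_iff (hΛ : IsDoublyEvenCode Λ) {x u : Fin (n + 1) → ℤ} :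
    x + (2 : ℤ) • u ∈ Λ ↔ x ∈ Λ :=
  Λ.add_mem_iff_left (hΛ.two_smul_mem u)

section Map

variable {S : (Fin (n + 1) → ℤ) ≃ₗ[ℤ] (Fin (n + 1) → ℤ)}

theorem map (hΛ : IsDoublyEvenCode Λ) (hS : (lorentzForm n).IsOrthogonal S) :
    IsDoublyEvenCode (Λ.map S.toLinearMap) where
  two_smul_mem u := by
    refine ⟨(2 : ℤ) • S.symm u, hΛ.two_smul_mem _, ?_⟩
    rw [LinearEquiv.coe_coe, map_smul, LinearEquiv.apply_symm_apply]
  four_dvd := by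
    rintro _ ⟨x, hx, rfl⟩
    exact (hS x x).symm ▸ hΛ.four_dvd x hx

theorem one_mem_map_iff (hΛ : IsDoublyEvenCode Λ) (hS : (lorentzForm n).IsOrthogonal S) :
    (1 : Fin (n + 1) → ℤ) ∈ Λ.map S.toLinearMap ↔ 1 ∈ Λ := by
  obtain ⟨u, hu⟩ := exists_apply_one_eq hS
  rw [← (hΛ.map hS).add_two_smul_mem_iff (u := u), ← hu]
  exact S.injective.mem_set_image

end Map

theorem notMem_inf_sup_span_one (hΛ : IsDoublyEvenCode Λ) (hΛ' : IsDoublyEvenCode Λ')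
    (h1 : 1 ∈ Λ → 1 ∈ Λ') {v : Fin (n + 1) → ℤ} (hv : v ∈ Λ) (hv' : v ∉ Λ') :
    v ∉ Λ ⊓ Λ' ⊔ Submodule.span ℤ {1} := by
  have htwo (u) : (2 : ℤ) • u ∈ Λ ⊓ Λ' := ⟨hΛ.two_smul_mem u, hΛ'.two_smul_mem u⟩
  rw [mem_sup_span_singleton_iff htwo]
  rintro (h | h)
  · exact hv' h.2
  · have h1Λ : 1 ∈ Λ := sub_sub_cancel v 1 ▸ Λ.sub_mem hv h.1
    exact hv' (sub_add_cancel v 1 ▸ Λ'.add_mem h.2 (h1 h1Λ))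

/-- If neither of `Λ`, `Λ'` contains the other, a vector of one outside the other can be moved
to a vector of the latter while fixing `Λ ⊓ Λ'` modulo `2`, which enlarges the intersection. -/
theorem exists_inf_lt_map_inf (hΛ : IsDoublyEvenCode Λ) (hΛ' : IsDoublyEvenCode Λ')
    (h1 : 1 ∈ Λ ↔ 1 ∈ Λ') (h : ¬Λ ≤ Λ') (h' : ¬Λ' ≤ Λ) :
    ∃ S : (Fin (n + 1) → ℤ) ≃ₗ[ℤ] (Fin (n + 1) → ℤ), (lorentzForm n).IsOrthogonal S ∧
      Λ ⊓ Λ' < Λ.map S.toLinearMap ⊓ Λ' := by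
  obtain ⟨x, hx, hx'⟩ := SetLike.not_le_iff_exists.1 h
  obtain ⟨y, hy', hy⟩ := SetLike.not_le_iff_exists.1 h'
  obtain ⟨S, hS, ⟨u, hu⟩, hSd⟩ := exists_isOrthogonal_of_notMem (D := Λ ⊓ Λ')
    (fun u => ⟨hΛ.two_smul_mem u, hΛ'.two_smul_mem u⟩) (hΛ.four_dvd x hx) (hΛ'.four_dvd y hy')
    (fun d hd => hΛ.even hx hd.1) (fun d hd => hΛ'.even hy' hd.2)
    (hΛ.notMem_inf_sup_span_one hΛ' h1.1 hx hx')
    (inf_comm Λ Λ' ▸ hΛ'.notMem_inf_sup_span_one hΛ h1.2 hy' hy)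
  have hmem {v w t} (hv : v ∈ Λ) (ht : S v = w + (2 : ℤ) • t) :
      w ∈ Λ.map S.toLinearMap :=
    (hΛ.map hS).add_two_smul_mem_iff.1 (ht ▸ Submodule.mem_map_of_mem hv)
  have hle : Λ ⊓ Λ' ≤ Λ.map S.toLinearMap ⊓ Λ' := fun d hd => by
    obtain ⟨t, ht⟩ := hSd d hd
    exact ⟨hmem hd.1 ht, hd.2⟩
  have hyS : y ∈ Λ.map S.toLinearMap ⊓ Λ' := ⟨hmem hx hu, hy'⟩
  exact ⟨S, hS, lt_of_le_of_ne hle fun heq => hy (heq ▸ hyS : y ∈ Λ ⊓ Λ').1⟩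

theorem exists_map_le_or_le_map (hΛ : IsDoublyEvenCode Λ) (hΛ' : IsDoublyEvenCode Λ')
    (h1 : 1 ∈ Λ ↔ 1 ∈ Λ') :
    ∃ S : (Fin (n + 1) → ℤ) ≃ₗ[ℤ] (Fin (n + 1) → ℤ), (lorentzForm n).IsOrthogonal S ∧
      (Λ.map S.toLinearMap ≤ Λ' ∨
        Λ' ≤ Λ.map S.toLinearMap) := by
  obtain ⟨_, ⟨S, hS, rfl⟩, hmax⟩ := set_has_maximal_iff_noetherian.2
    (inferInstance : IsNoetherian ℤ (Fin (n + 1) → ℤ))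
    {D | ∃ S : (Fin (n + 1) → ℤ) ≃ₗ[ℤ] (Fin (n + 1) → ℤ), (lorentzForm n).IsOrthogonal S ∧
      D = Λ.map S.toLinearMap ⊓ Λ'}
    ⟨_, LinearEquiv.refl ℤ _, fun _ _ => rfl, rfl⟩
  refine ⟨S, hS, ?_⟩
  by_contra! h
  obtain ⟨T, hT, hlt⟩ := (hΛ.map hS).exists_inf_lt_map_inf hΛ'
    ((hΛ.one_mem_map_iff hS).trans h1) h.1 h.2
  refine hmax _ ⟨S.trans T, fun a b => (hT _ _).trans (hS a b), ?_⟩ hlt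
  rw [LinearEquiv.coe_trans, Submodule.map_comp]

end IsDoublyEvenCode

/-- An embedding of the rescaled lattice `L(2)` into the odd unimodular Lorentzian lattice of the
same rank, whose image contains `2 ℤ^(n+1)`. -/
structure IsCodeEmbedding {L : Type*} [AddCommGroup L] {n : ℕ} (C : BilinForm ℤ L)
    (φ : L →ₗ[ℤ] (Fin (n + 1) → ℤ)) : Prop where
  apply_apply : ∀ x y, lorentzForm n (φ x) (φ y) = 2 * C x y
  two_smul_mem : ∀ u, (2 : ℤ) • u ∈ LinearMap.range φ

namespace IsCodeEmbedding

variable {n : ℕ} {L : Type*} [AddCommGroup L] {C : BilinForm ℤ L} {φ : L →ₗ[ℤ] (Fin (n + 1) → ℤ)}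

theorem isDoublyEvenCode (hφ : IsCodeEmbedding C φ) (heven : ∀ x, Even (C x x)) :
    IsDoublyEvenCode (LinearMap.range φ) where
  two_smul_mem := hφ.two_smul_mem
  four_dvd := by
    rintro _ ⟨x, rfl⟩
    obtain ⟨k, hk⟩ := heven x
    exact ⟨k, by rw [hφ.apply_apply, hk]; ring⟩

theorem comp (hφ : IsCodeEmbedding C φ) {S : (Fin (n + 1) → ℤ) ≃ₗ[ℤ] (Fin (n + 1) → ℤ)}
    (hS : (lorentzForm n).IsOrthogonal S) : IsCodeEmbedding C (S.toLinearMap ∘ₗ φ) where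
  apply_apply x y := (hS _ _).trans (hφ.apply_apply x y)
  two_smul_mem u := by
    obtain ⟨x, hx⟩ := hφ.two_smul_mem (S.symm u)
    refine ⟨x, ?_⟩
    rw [LinearMap.comp_apply, hx, LinearEquiv.coe_coe, map_smul, LinearEquiv.apply_symm_apply]

theorem exists_isometry_of_range_le {L' : Type*} [AddCommGroup L'] [Module.Free ℤ L]
    {C' : BilinForm ℤ L'} {φ' : L' →ₗ[ℤ] (Fin (n + 1) → ℤ)} (hφ : IsCodeEmbedding C φ)
    (hφ' : IsCodeEmbedding C' φ') (h : LinearMap.range φ ≤ LinearMap.range φ') :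
    ∃ P : L →ₗ[ℤ] L', ∀ x y, C' (P x) (P y) = C x y := by
  obtain ⟨P, hP⟩ := Module.projective_lifting_property φ'.rangeRestrict
    (φ.codRestrict _ fun x => h ⟨x, rfl⟩) φ'.surjective_rangeRestrict
  have hPφ (x : L) : φ' (P x) = φ x := congrArg Subtype.val (LinearMap.congr_fun hP x)
  refine ⟨P, fun x y => mul_left_cancel₀ two_ne_zero ?_⟩
  rw [← hφ.apply_apply, ← hφ'.apply_apply, hPφ, hPφ]

theorem exists_eq_two_smul (hφ : IsCodeEmbedding C φ) {x : L} (hx : ∀ y, Even (C x y)) :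
    ∃ g, φ x = (2 : ℤ) • g := by
  refine (isUnimodular_lorentzForm n).exists_eq_two_smul fun u => ?_
  obtain ⟨y, hy⟩ := hφ.two_smul_mem u
  have hxu : lorentzForm n (φ x) u = C x y := by
    refine mul_left_cancel₀ two_ne_zero ?_
    rw [← hφ.apply_apply, hy, map_smul, smul_eq_mul]
  exact hxu ▸ hx y

section TwoSMul

variable {x : L} {g : Fin (n + 1) → ℤ}

theorem lorentzForm_apply_right (hφ : IsCodeEmbedding C φ) (hg : φ x = (2 : ℤ) • g) (c : L) :
    lorentzForm n g (φ c) = C x c := by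
  refine mul_left_cancel₀ two_ne_zero ?_
  rw [← hφ.apply_apply, hg, map_smul, LinearMap.smul_apply, smul_eq_mul]

theorem four_dvd_apply_self_iff (hφ : IsCodeEmbedding C φ) (hg : φ x = (2 : ℤ) • g) :
    4 ∣ C x x ↔ Even (lorentzForm n g 1) := by
  rw [← hφ.lorentzForm_apply_right hg, hg, map_smul, smul_eq_mul, even_lorentzForm_one_iff,
    even_iff_two_dvd]
  omega

end TwoSMul

theorem one_mem_range_iff [Module.Free ℤ L] (hφ : IsCodeEmbedding C φ)
    (hC : IsEvenTwoElementary C) : 1 ∈ LinearMap.range φ ↔ IsDeltaZero C := by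
  constructor
  · rintro ⟨c, hc⟩ x hx
    obtain ⟨g, hg⟩ := hφ.exists_eq_two_smul hx
    rw [hφ.four_dvd_apply_self_iff hg, ← hc, hφ.lorentzForm_apply_right hg]
    exact hx c
  · intro hδ
    obtain ⟨c, hc⟩ := hφ.two_smul_mem 1
    obtain ⟨d, rfl⟩ := exists_eq_two_smul_of_forall_dual_even (x := c) fun f => by
      obtain ⟨x, hx⟩ := hC.exists_eq_two_smul f
      have hxeven (y : L) : Even (C x y) := by simp [hx]
      obtain ⟨g, hg⟩ := hφ.exists_eq_two_smul hxeven
      have hfc : f c = lorentzForm n g 1 := by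
        have h := hφ.lorentzForm_apply_right hg c
        rw [hc, map_smul, hx] at h
        exact (mul_left_cancel₀ two_ne_zero h).symm
      exact hfc ▸ (hφ.four_dvd_apply_self_iff hg).1 (hδ x hxeven)
    exact ⟨d, smul_right_injective _ (two_ne_zero (α := ℤ)) ((map_smul φ 2 d).symm.trans hc)⟩

end IsCodeEmbedding

section Isometry

variable {L L' : Type} [AddCommGroup L] [Module.Free ℤ L] [Module.Finite ℤ L]
  [AddCommGroup L'] [Module.Free ℤ L'] [Module.Finite ℤ L']
  {C : BilinForm ℤ L} {C' : BilinForm ℤ L'} {n : ℕ}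

/-- A maximal sublattice `T` on which `C` takes even values is self-dual for `C / 2`, hence is the
odd unimodular Lorentzian lattice; the embedding is `x ↦ 2 x ∈ T`. -/
theorem IsEvenTwoElementary.exists_isCodeEmbedding (hC : IsEvenTwoElementary C)
    (hL : IsLorentzian C) (hrank : Module.finrank ℤ L = n + 1) {x₀ : L} (hx₀ : ¬4 ∣ C x₀ x₀) :
    ∃ φ : L →ₗ[ℤ] (Fin (n + 1) → ℤ), IsCodeEmbedding C φ := by
  obtain ⟨T, hx₀T, hT⟩ := exists_submodule_mem_iff_forall_even hC.isSymm hC.even x₀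
  obtain ⟨K, hK⟩ := exists_eq_two_smul_of_forall_even (C := C.compl₁₂ T.subtype T.subtype)
    fun x y => (hT y).1 y.2 x x.2
  have hKC (x y : T) : C x y = 2 * K x y := LinearMap.congr_fun₂ hK x y
  have htwo (x : L) : (2 : ℤ) • x ∈ T := (hT _).2 fun y _ => by simp
  have hKL : IsLorentzian K := hL.of_map T.subtype two_pos hKC fun x => ⟨⟨_, htwo x⟩, rfl⟩
  have hodd : ∃ x, ¬Even (K x x) := by
    refine ⟨⟨x₀, hx₀T⟩, fun h => hx₀ ?_⟩
    rw [hKC ⟨x₀, hx₀T⟩ ⟨x₀, hx₀T⟩]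
    exact mul_dvd_mul_left 2 h.two_dvd
  obtain ⟨e, he⟩ := (hC.isUnimodular hT hKC).exists_linearEquiv_lorentzForm hKL hodd
    ((finrank_eq_of_two_smul_mem htwo).trans hrank)
  refine ⟨e.toLinearMap ∘ₗ ((2 : ℤ) • LinearMap.id).codRestrict T htwo, fun x y => ?_, fun u =>
    ⟨e.symm u, ?_⟩⟩
  · refine (he _ _).trans (mul_left_cancel₀ two_ne_zero ((hKC _ _).symm.trans ?_))
    simp only [LinearMap.codRestrict_apply, LinearMap.smul_apply, LinearMap.id_apply, map_smul,
      smul_eq_mul]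
  · rw [← e.apply_symm_apply ((2 : ℤ) • u), map_smul]
    rfl

theorem exists_isometry_or_exists_isometry (hC : IsEvenTwoElementary C)
    (hC' : IsEvenTwoElementary C') (hL : IsLorentzian C) (hL' : IsLorentzian C')
    (hrank : Module.finrank ℤ L = n + 1) (hrank' : Module.finrank ℤ L' = n + 1)
    (hδ : IsDeltaZero C ↔ IsDeltaZero C') (h4 : ∃ x, ¬4 ∣ C x x) (h4' : ∃ x, ¬4 ∣ C' x x) :
    (∃ P : L →ₗ[ℤ] L', ∀ x y, C' (P x) (P y) = C x y) ∨
      ∃ P : L' →ₗ[ℤ] L, ∀ x y, C (P x) (P y) = C' x y := by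
  obtain ⟨x, hx⟩ := h4
  obtain ⟨x', hx'⟩ := h4'
  obtain ⟨φ, hφ⟩ := hC.exists_isCodeEmbedding hL hrank hx
  obtain ⟨φ', hφ'⟩ := hC'.exists_isCodeEmbedding hL' hrank' hx'
  obtain ⟨S, hS, hle⟩ := (hφ.isDoublyEvenCode hC.even).exists_map_le_or_le_map
    (hφ'.isDoublyEvenCode hC'.even)
    ((hφ.one_mem_range_iff hC).trans (hδ.trans (hφ'.one_mem_range_iff hC').symm))
  rw [← LinearMap.range_comp] at hle
  exact hle.imp ((hφ.comp hS).exists_isometry_of_range_le hφ')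
    (hφ'.exists_isometry_of_range_le (hφ.comp hS))

end Isometry

/-! ### Gram matrices -/

section Congruence

variable {n : Type*} [Fintype n] [DecidableEq n] {M M' : Matrix n n ℤ}

/-- `M` and `M'` are `ℤ`-congruent: they are Gram matrices of the same lattice. -/
def IsIntegrallyCongruent (M M' : Matrix n n ℤ) : Prop :=
  ∃ P : Matrix n n ℤ, IsUnit P.det ∧ Pᵀ * M * P = M'

namespace IsIntegrallyCongruent

theorem symm (h : IsIntegrallyCongruent M M') : IsIntegrallyCongruent M' M := by
  obtain ⟨P, hP, rfl⟩ := h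
  refine ⟨P⁻¹, Matrix.isUnit_nonsing_inv_det _ hP, ?_⟩
  rw [Matrix.mul_assoc, Matrix.mul_nonsing_inv_cancel_right _ _ hP, ← Matrix.mul_assoc,
    ← transpose_mul, Matrix.mul_nonsing_inv _ hP, transpose_one, Matrix.one_mul]

theorem smul (h : IsIntegrallyCongruent M M') (c : ℤ) : IsIntegrallyCongruent (c • M) (c • M') := by
  obtain ⟨P, hP, rfl⟩ := h
  exact ⟨P, hP, by rw [Matrix.mul_smul, Matrix.smul_mul]⟩

theorem of_isometry (hdet : M'.det ≠ 0) (h : M.det.natAbs = M'.det.natAbs)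
    {f : (n → ℤ) →ₗ[ℤ] (n → ℤ)} (hf : ∀ x y, M.toBilin' (f x) (f y) = M'.toBilin' x y) :
    IsIntegrallyCongruent M M' := by
  have hP : f.toMatrix'ᵀ * M * f.toMatrix' = M' := by
    refine Matrix.toBilin'.injective (LinearMap.ext₂ fun x y => ?_)
    rw [← Matrix.toBilin'_comp, Matrix.toLin'_toMatrix', LinearMap.BilinForm.comp_apply, hf]
  refine ⟨f.toMatrix', Int.isUnit_iff_natAbs_eq.2 ?_, hP⟩
  have hmul := congrArg Int.natAbs (congrArg Matrix.det hP)
  rw [det_mul, det_mul, det_transpose, Int.natAbs_mul, Int.natAbs_mul, h] at hmul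
  exact Nat.eq_one_of_mul_eq_one_right <|
    Nat.eq_of_mul_eq_mul_right (Int.natAbs_pos.2 hdet) ((mul_right_comm _ _ _).trans
      (hmul.trans (one_mul _).symm))

end IsIntegrallyCongruent

theorem exists_eq_two_smul_iff_natAbs_det {N : Matrix n n ℤ}
    (h : M * N = (2 : ℤ) • (1 : Matrix n n ℤ)) :
    (∃ K : Matrix n n ℤ, M = (2 : ℤ) • K) ↔ M.det.natAbs = 2 ^ Fintype.card n := by
  have hdet : M.det.natAbs * N.det.natAbs = 2 ^ Fintype.card n := by
    rw [← Int.natAbs_mul, ← det_mul, h, det_smul, det_one, mul_one, Int.natAbs_pow]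
    rfl
  constructor
  · rintro ⟨K, rfl⟩
    have hKN : K * N = 1 := smul_right_injective _ (two_ne_zero (α := ℤ))
      ((Matrix.smul_mul 2 K N).symm.trans h)
    have hK : K.det.natAbs = 1 := Int.isUnit_iff_natAbs_eq.1
      (.of_mul_eq_one N.det (by rw [← det_mul, hKN, det_one]))
    rw [det_smul, Int.natAbs_mul, Int.natAbs_pow, hK, mul_one]
    rfl
  · intro hM
    have hN : IsUnit N.det := Int.isUnit_iff_natAbs_eq.2 <|
      (Nat.mul_eq_left (pow_ne_zero _ two_ne_zero)).1 (hM ▸ hdet)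
    refine ⟨N⁻¹, ?_⟩
    rw [← Matrix.mul_nonsing_inv_cancel_right N M hN, h, Matrix.smul_mul, Matrix.one_mul]

end Congruence

section GramMatrices

variable {n : Type*} [Fintype n] [DecidableEq n] {M N : Matrix n n ℤ}

theorem isEvenTwoElementary_toBilin' (hs : M.IsSymm) (he : ∀ i, Even (M i i))
    (hMN : M * N = (2 : ℤ) • (1 : Matrix n n ℤ)) : IsEvenTwoElementary M.toBilin' where
  isSymm := Matrix.isSymm_toBilin'_iff_isSymm.2 hs
  even := by
    refine even_apply_self_of_span_eq_top (Matrix.isSymm_toBilin'_iff_isSymm.2 hs)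
      (Pi.basisFun ℤ n).span_eq ?_
    rintro _ ⟨i, rfl⟩
    rw [Pi.basisFun_apply, Matrix.toBilin'_single]
    exact he i
  exists_eq_two_smul f := by
    refine ⟨N *ᵥ fun i => f (Pi.single i 1), LinearMap.pi_ext' fun i => ?_⟩
    ext
    rw [LinearMap.comp_apply, (Matrix.isSymm_toBilin'_iff_isSymm.2 hs).eq, Matrix.toBilin'_apply',
      mulVec_mulVec, hMN, smul_mulVec, one_mulVec]
    simp

theorem exists_mulVec_eq_two_smul {x : n → ℤ} (hs : M.IsSymm)
    (hx : ∀ y, Even (M.toBilin' x y)) : ∃ z, M *ᵥ x = (2 : ℤ) • z := by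
  choose z hz using fun i => (hx (Pi.single i 1)).two_dvd
  refine ⟨z, funext fun i => (Eq.trans ?_ (hz i))⟩
  rw [(Matrix.isSymm_toBilin'_iff_isSymm.2 hs).eq, Matrix.toBilin'_apply', single_one_dotProduct]

theorem isDeltaZero_toBilin'_of_mul_eq_one (hs : M.IsSymm) (hMN : M * N = 1) :
    IsDeltaZero M.toBilin' := by
  intro x hx
  obtain ⟨z, hz⟩ := exists_mulVec_eq_two_smul hs hx
  have hxz : x = (2 : ℤ) • (N *ᵥ z) := by
    rw [← mulVec_smul, ← hz, mulVec_mulVec, mul_eq_one_comm.1 hMN, one_mulVec]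
  rw [hxz, map_smul, map_smul, LinearMap.smul_apply, smul_smul]
  exact dvd_mul_right 4 _

theorem exists_eq_intCast_iff_four_dvd (hdet : M.det ≠ 0) {x z : n → ℤ}
    (h : M *ᵥ x = (2 : ℤ) • z) :
    (∃ k : ℤ, (fun i => (z i : ℚ)) ⬝ᵥ
      ((M.map (Int.cast : ℤ → ℚ))⁻¹ *ᵥ fun i => (z i : ℚ)) = (k : ℚ)) ↔
      4 ∣ M.toBilin' x x := by
  let A := M.map (Int.cast : ℤ → ℚ)
  have hA : IsUnit A.det := by
    have hdetA : A.det = (M.det : ℚ) := ((Int.castRingHom ℚ).map_det M).symm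
    exact hdetA ▸ (Int.cast_ne_zero.2 hdet).isUnit
  have hAx : A *ᵥ (fun i => (x i : ℚ)) = (2 : ℚ) • fun i => (z i : ℚ) := funext fun i => by
    refine ((Int.castRingHom ℚ).map_mulVec M x i).symm.trans ?_
    simp [h]
  have hAz : A⁻¹ *ᵥ (fun i => (z i : ℚ)) = (2⁻¹ : ℚ) • fun i => (x i : ℚ) := by
    rw [← inv_smul_smul₀ (two_ne_zero (α := ℚ)) fun i => (z i : ℚ), ← hAx, mulVec_smul,
      mulVec_mulVec, Matrix.nonsing_inv_mul _ hA, one_mulVec]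
  have hzx : (fun i => (z i : ℚ)) ⬝ᵥ (fun i => (x i : ℚ)) = ((z ⬝ᵥ x : ℤ) : ℚ) :=
    ((Int.castRingHom ℚ).map_dotProduct z x).symm
  have hxx : M.toBilin' x x = 2 * (z ⬝ᵥ x) := by
    rw [Matrix.toBilin'_apply', h, dotProduct_smul, dotProduct_comm, smul_eq_mul]
  rw [hAz, dotProduct_smul, hzx, hxx, smul_eq_mul]
  have hk (k : ℤ) : 2⁻¹ * ((z ⬝ᵥ x : ℤ) : ℚ) = k ↔ z ⬝ᵥ x = 2 * k := by
    rw [inv_mul_eq_iff_eq_mul₀ two_ne_zero]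
    norm_cast
  simp only [hk]
  exact (mul_dvd_mul_iff_left (two_ne_zero (α := ℤ))).symm

theorem forall_four_dvd_iff (hs : M.IsSymm) (hMN : M * N = (2 : ℤ) • (1 : Matrix n n ℤ)) :
    (∀ x, 4 ∣ M.toBilin' x x) ↔ M.det.natAbs = 2 ^ Fintype.card n ∧ IsDeltaZero M.toBilin' := by
  have hsymm := Matrix.isSymm_toBilin'_iff_isSymm.2 hs
  rw [← exists_eq_two_smul_iff_natAbs_det hMN]
  constructor
  · refine fun h => ⟨?_, fun x _ => h x⟩
    have heven (i j) : Even (M i j) := by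
      rw [← Matrix.toBilin'_single M i j]
      exact even_apply_of_four_dvd hsymm (h _) (h _) (h _)
    choose K hK using fun i j => (heven i j).two_dvd
    exact ⟨Matrix.of K, Matrix.ext hK⟩
  · rintro ⟨⟨K, rfl⟩, hδ⟩ x
    exact hδ x fun y => by
      rw [map_smul, LinearMap.smul_apply, LinearMap.smul_apply]
      exact even_two_mul _

end GramMatrices

section InvariantsOfLength

variable {r q a : ℕ} {M : Matrix (Fin r) (Fin r) ℤ}

theorem ElemOfLength.natAbs_det (h : ElemOfLength q a M) (hdet : M.det ≠ 0) :
    M.det.natAbs = q ^ a := by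
  obtain ⟨e⟩ := h
  have hinj : Function.Injective M.mulVecLin := Matrix.mulVec_injective_of_det_ne_zero hdet
  have hcard := Submodule.natAbs_det_equiv (LinearMap.range M.mulVecLin)
    (LinearEquiv.ofInjective M.mulVecLin hinj)
  rw [Nat.card_congr e.toEquiv, Nat.card_fun, Nat.card_zmod, Nat.card_fin] at hcard
  rw [← hcard, ← LinearMap.det_toLin']
  rfl

theorem ElemOfLength.exists_mul_eq_smul_one (h : ElemOfLength q a M) :
    ∃ N, M * N = (q : ℤ) • (1 : Matrix (Fin r) (Fin r) ℤ) := by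
  obtain ⟨e⟩ := h
  have hmem (x : Fin r → ℤ) : ∃ y, M *ᵥ y = (q : ℤ) • x := by
    change (q : ℤ) • x ∈ LinearMap.range M.mulVecLin
    rw [← Submodule.Quotient.mk_eq_zero, Submodule.Quotient.mk_smul, ← e.map_eq_zero_iff,
      map_smul]
    ext i
    simp
  choose y hy using fun j => hmem (Pi.single j 1)
  refine ⟨Matrix.of fun i j => y j i, Matrix.ext fun i j => (congrFun (hy j) i).trans ?_⟩
  rw [Matrix.smul_apply, Pi.smul_apply, Matrix.one_apply, Pi.single_apply]

end InvariantsOfLength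

theorem deltaZero_iff_isDeltaZero {r : ℕ} {M N : Matrix (Fin r) (Fin r) ℤ} (hs : M.IsSymm)
    (hdet : M.det ≠ 0) (hMN : M * N = (2 : ℤ) • (1 : Matrix (Fin r) (Fin r) ℤ)) :
    DeltaZero M ↔ IsDeltaZero M.toBilin' := by
  constructor
  · intro h x hx
    obtain ⟨z, hz⟩ := exists_mulVec_eq_two_smul hs hx
    exact (exists_eq_intCast_iff_four_dvd hdet hz).1 (h z)
  · intro h z
    have hz : M *ᵥ (N *ᵥ z) = (2 : ℤ) • z := by
      rw [mulVec_mulVec, hMN, smul_mulVec, one_mulVec]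
    refine (exists_eq_intCast_iff_four_dvd hdet hz).2 (h _ fun y => ?_)
    rw [(Matrix.isSymm_toBilin'_iff_isSymm.2 hs).eq, Matrix.toBilin'_apply', hz, dotProduct_smul]
    exact even_two_mul _

section Hyperbolic

variable {n : ℕ}

theorem dotProduct_diagonal_sign (u w : Fin (n + 1) → ℝ) :
    u ⬝ᵥ Matrix.diagonal (fun i : Fin (n + 1) => if (i : ℕ) = 0 then (1 : ℝ) else -1) *ᵥ w =
      u 0 * w 0 - ∑ i : Fin n, u i.succ * w i.succ := by
  simp only [dotProduct, mulVec_diagonal, Fin.sum_univ_succ]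
  simp [sub_eq_add_neg]

/-- The vector `w 0 • u - u 0 • w` is spacelike, which bounds a combination of the three products
appearing here. -/
theorem reversed_cauchy_schwarz (u w : Fin (n + 1) → ℝ)
    (hu : 0 < u 0 * u 0 - ∑ i : Fin n, u i.succ * u i.succ) :
    (u 0 * u 0 - ∑ i : Fin n, u i.succ * u i.succ) *
      (w 0 * w 0 - ∑ i : Fin n, w i.succ * w i.succ) ≤
      (u 0 * w 0 - ∑ i : Fin n, u i.succ * w i.succ) ^ 2 := by
  have hspace := Finset.sum_nonneg fun (i : Fin n) (_ : i ∈ Finset.univ) =>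
    sq_nonneg (w 0 * u i.succ - u 0 * w i.succ)
  have hU := Finset.sum_nonneg fun (i : Fin n) (_ : i ∈ Finset.univ) =>
    mul_self_nonneg (u i.succ)
  have hexpand : ∑ i : Fin n, (w 0 * u i.succ - u 0 * w i.succ) ^ 2 =
      w 0 ^ 2 * ∑ i : Fin n, u i.succ * u i.succ - 2 * u 0 * w 0 * ∑ i : Fin n, u i.succ * w i.succ
        + u 0 ^ 2 * ∑ i : Fin n, w i.succ * w i.succ := by
    rw [Finset.mul_sum, Finset.mul_sum, Finset.mul_sum, ← Finset.sum_sub_distrib,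
      ← Finset.sum_add_distrib]
    exact Finset.sum_congr rfl fun i _ => by ring
  rw [hexpand] at hspace
  generalize ∑ i : Fin n, u i.succ * u i.succ = U at *
  generalize ∑ i : Fin n, u i.succ * w i.succ = S at *
  generalize ∑ i : Fin n, w i.succ * w i.succ = W at *
  have hu0 : 0 < u 0 ^ 2 := by nlinarith
  have hprod := mul_nonneg hu.le hspace
  have hscaled : 0 ≤ u 0 ^ 2 * ((u 0 * w 0 - S) ^ 2 - (u 0 * u 0 - U) * (w 0 * w 0 - W)) := by
    nlinarith [sq_nonneg (w 0 * (u 0 * u 0 - U) - u 0 * (u 0 * w 0 - S))]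
  exact sub_nonneg.1 (nonneg_of_mul_nonneg_right hscaled hu0)

theorem cast_toBilin'_apply {n R : Type*} [Fintype n] [DecidableEq n] [CommRing R]
    (M : Matrix n n ℤ) (x y : n → ℤ) : ((M.toBilin' x y : ℤ) : R) =
      (fun i => (x i : R)) ⬝ᵥ (M.map (Int.cast : ℤ → R)) *ᵥ fun i => (y i : R) := by
  simp [Matrix.toBilin'_apply', dotProduct, mulVec]

/-- A nonempty open cone in `ℝ^ι` contains a rational vector, and clearing denominators keeps it
in the cone. -/
theorem exists_pos_toBilin' {ι : Type*} [Fintype ι] [DecidableEq ι] {M : Matrix ι ι ℤ}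
    {v : ι → ℝ} (hv : 0 < v ⬝ᵥ M.map (Int.cast : ℤ → ℝ) *ᵥ v) :
    ∃ x, 0 < M.toBilin' x x := by
  have hopen : IsOpen {x : ι → ℝ | 0 < x ⬝ᵥ M.map (Int.cast : ℤ → ℝ) *ᵥ x} := by
    refine isOpen_lt continuous_const ?_
    simp only [dotProduct, mulVec]
    fun_prop
  have hdense : DenseRange fun (q : ι → ℚ) i => (q i : ℝ) :=
    DenseRange.piMap fun _ => Rat.denseRange_cast
  obtain ⟨q, hq⟩ := hdense.exists_mem_open hopen ⟨v, hv⟩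
  obtain ⟨d, hd⟩ := IsLocalization.exist_integer_multiples_of_finite (nonZeroDivisors ℤ) q
  have hd0 : ((d : ℤ) : ℝ) ≠ 0 := Int.cast_ne_zero.2 (nonZeroDivisors.ne_zero d.2)
  choose z hz using hd
  have hzq : (fun i => (z i : ℝ)) = ((d : ℤ) : ℝ) • fun i => (q i : ℝ) := by
    ext i
    have h := hz i
    simp only [algebraMap_int_eq, eq_intCast, zsmul_eq_mul] at h
    simpa using congrArg (Rat.cast : ℚ → ℝ) h
  have hpos : (0 : ℝ) < ((M.toBilin' z z : ℤ) : ℝ) := by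
    rw [cast_toBilin'_apply, hzq, mulVec_smul, dotProduct_smul, smul_dotProduct, smul_eq_mul,
      smul_eq_mul, ← mul_assoc]
    exact mul_pos (mul_self_pos.2 hd0) hq
  exact ⟨z, by exact_mod_cast hpos⟩

theorem IsHyperbolicGram.isLorentzian {M : Matrix (Fin (n + 1)) (Fin (n + 1)) ℤ}
    (hM : IsHyperbolicGram M) : IsLorentzian M.toBilin' := by
  obtain ⟨P, hP, hPM⟩ := hM
  have hval (x y : Fin (n + 1) → ℝ) : (P *ᵥ x) ⬝ᵥ M.map (Int.cast : ℤ → ℝ) *ᵥ (P *ᵥ y) =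
      x 0 * y 0 - ∑ i : Fin n, x i.succ * y i.succ := by
    rw [← dotProduct_diagonal_sign, ← hPM, ← mulVec_mulVec, ← mulVec_mulVec,
      dotProduct_mulVec x Pᵀ, vecMul_transpose]
  have hsurj (x : Fin (n + 1) → ℝ) : ∃ u, x = P *ᵥ u :=
    ⟨P⁻¹ *ᵥ x, by rw [mulVec_mulVec, Matrix.mul_nonsing_inv _ hP, one_mulVec]⟩
  refine ⟨exists_pos_toBilin' (v := P *ᵥ Pi.single 0 1) ?_, fun x y hx => ?_⟩
  · rw [hval]
    simp [Fin.succ_ne_zero]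
  · obtain ⟨u, hu⟩ := hsurj fun i => (x i : ℝ)
    obtain ⟨w, hw⟩ := hsurj fun i => (y i : ℝ)
    have hreal : ((M.toBilin' x x : ℤ) : ℝ) * (M.toBilin' y y : ℤ) ≤ (M.toBilin' x y : ℤ) ^ 2 := by
      replace hx : (0 : ℝ) < ((M.toBilin' x x : ℤ) : ℝ) := Int.cast_pos.2 hx
      simp only [cast_toBilin'_apply, hu, hw, hval] at hx ⊢
      exact reversed_cauchy_schwarz u w hx
    exact_mod_cast hreal

end Hyperbolic

section Uniqueness

variable {n : ℕ} {M M' N : Matrix (Fin (n + 1)) (Fin (n + 1)) ℤ}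

theorem isIntegrallyCongruent_of_exists_not_four_dvd (hM : IsEvenTwoElementary M.toBilin')
    (hM' : IsEvenTwoElementary M'.toBilin') (hL : IsLorentzian M.toBilin')
    (hL' : IsLorentzian M'.toBilin') (hdet : M.det ≠ 0) (hdets : M.det.natAbs = M'.det.natAbs)
    (hδ : IsDeltaZero M.toBilin' ↔ IsDeltaZero M'.toBilin') (h4 : ∃ x, ¬4 ∣ M.toBilin' x x)
    (h4' : ∃ x, ¬4 ∣ M'.toBilin' x x) : IsIntegrallyCongruent M M' := by
  have hdet0 : M'.det ≠ 0 := by rwa [← Int.natAbs_ne_zero, ← hdets, Int.natAbs_ne_zero]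
  rcases exists_isometry_or_exists_isometry hM hM' hL hL' (Module.finrank_fin_fun ℤ)
    (Module.finrank_fin_fun ℤ) hδ h4 h4' with ⟨P, hP⟩ | ⟨P, hP⟩
  · exact (IsIntegrallyCongruent.of_isometry hdet hdets.symm hP).symm
  · exact .of_isometry hdet0 hdets hP

/-- If all norms of `M` are divisible by four, then `M / 2` is an even unimodular matrix, and it
has a norm not divisible by four. -/
theorem exists_eq_two_smul_of_forall_four_dvd (hs : M.IsSymm) (hL : IsLorentzian M.toBilin')
    (hMN : M * N = (2 : ℤ) • (1 : Matrix (Fin (n + 1)) (Fin (n + 1)) ℤ))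
    (h4 : ∀ x, 4 ∣ M.toBilin' x x) :
    ∃ K, M = (2 : ℤ) • K ∧ IsEvenTwoElementary K.toBilin' ∧ IsLorentzian K.toBilin' ∧
      K.det.natAbs = 1 ∧ IsDeltaZero K.toBilin' ∧ ∃ x, ¬4 ∣ K.toBilin' x x := by
  obtain ⟨K, rfl⟩ := (exists_eq_two_smul_iff_natAbs_det hMN).2 ((forall_four_dvd_iff hs hMN).1 h4).1
  have hKN : K * N = 1 := smul_right_injective _ (two_ne_zero (α := ℤ))
    ((Matrix.smul_mul 2 K N).symm.trans hMN)
  have hKN2 : K * ((2 : ℤ) • N) = (2 : ℤ) • 1 := by rw [Matrix.mul_smul, hKN]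
  have hKs : K.IsSymm := smul_right_injective _ (two_ne_zero (α := ℤ)) hs
  have hdet : K.det.natAbs = 1 := Int.isUnit_iff_natAbs_eq.1
    (.of_mul_eq_one N.det (by rw [← det_mul, hKN, det_one]))
  have htwo (x y) : ((2 : ℤ) • K).toBilin' x y = 2 * K.toBilin' x y := by
    rw [map_smul]
    rfl
  refine ⟨K, rfl, isEvenTwoElementary_toBilin' hKs (fun i => ?_) hKN2, hL.of_map LinearMap.id
    two_pos htwo fun x => ⟨_, rfl⟩, hdet, isDeltaZero_toBilin'_of_mul_eq_one hKs hKN, ?_⟩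
  · have h := h4 (Pi.single i 1)
    rw [htwo, Matrix.toBilin'_single] at h
    rw [even_iff_two_dvd]
    omega
  · by_contra! h
    have hpow := ((forall_four_dvd_iff hKs hKN2).1 h).1
    rw [hdet, Fintype.card_fin, pow_succ] at hpow
    omega

theorem isIntegrallyCongruent_of_forall_four_dvd {N' : Matrix (Fin (n + 1)) (Fin (n + 1)) ℤ}
    (hs : M.IsSymm) (hs' : M'.IsSymm) (hL : IsLorentzian M.toBilin')
    (hL' : IsLorentzian M'.toBilin')
    (hMN : M * N = (2 : ℤ) • (1 : Matrix (Fin (n + 1)) (Fin (n + 1)) ℤ))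
    (hMN' : M' * N' = (2 : ℤ) • (1 : Matrix (Fin (n + 1)) (Fin (n + 1)) ℤ))
    (h4 : ∀ x, 4 ∣ M.toBilin' x x) (h4' : ∀ x, 4 ∣ M'.toBilin' x x) :
    IsIntegrallyCongruent M M' := by
  obtain ⟨K, rfl, hK, hKL, hdet, hδ, hK4⟩ := exists_eq_two_smul_of_forall_four_dvd hs hL hMN h4
  obtain ⟨K', rfl, hK', hKL', hdet', hδ', hK4'⟩ :=
    exists_eq_two_smul_of_forall_four_dvd hs' hL' hMN' h4'
  exact (isIntegrallyCongruent_of_exists_not_four_dvd hK hK' hKL hKL'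
    (by omega) (hdet.trans hdet'.symm) (iff_of_true hδ hδ') hK4
    hK4').smul 2

end Uniqueness

/-- Nikulin's uniqueness theorem: two even hyperbolic 2-elementary Gram matrices with the
same invariants `(r, a, δ)` are `ℤ`-congruent. -/
theorem stmt_9 (r a : ℕ) (M M' : Matrix (Fin r) (Fin r) ℤ)
    (hs : M.IsSymm) (hs' : M'.IsSymm)
    (he : ∀ i, Even (M i i)) (he' : ∀ i, Even (M' i i))
    (hdet : M.det ≠ 0) (hdet' : M'.det ≠ 0)
    (hh : IsHyperbolicGram M) (hh' : IsHyperbolicGram M')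
    (hel : ElemOfLength 2 a M) (hel' : ElemOfLength 2 a M')
    (hδ : DeltaZero M ↔ DeltaZero M') :
    ∃ P : Matrix (Fin r) (Fin r) ℤ, IsUnit P.det ∧ Pᵀ * M * P = M' := by
  rcases r with _ | n
  · exact ⟨1, by simp, Subsingleton.elim _ _⟩
  obtain ⟨N, hMN⟩ := hel.exists_mul_eq_smul_one
  obtain ⟨N', hMN'⟩ := hel'.exists_mul_eq_smul_one
  have hdets : M.det.natAbs = M'.det.natAbs :=
    (hel.natAbs_det hdet).trans (hel'.natAbs_det hdet').symm
  rw [deltaZero_iff_isDeltaZero hs hdet hMN, deltaZero_iff_isDeltaZero hs' hdet' hMN'] at hδ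
  have h4iff : (∀ x, 4 ∣ M.toBilin' x x) ↔ ∀ x, 4 ∣ M'.toBilin' x x := by
    rw [forall_four_dvd_iff hs hMN, forall_four_dvd_iff hs' hMN', hdets, hδ]
  by_cases h4 : ∀ x, 4 ∣ M.toBilin' x x
  · exact isIntegrallyCongruent_of_forall_four_dvd hs hs' hh.isLorentzian hh'.isLorentzian hMN hMN'
      h4 (h4iff.1 h4)
  · exact isIntegrallyCongruent_of_exists_not_four_dvd (isEvenTwoElementary_toBilin' hs he hMN)
      (isEvenTwoElementary_toBilin' hs' he' hMN') hh.isLorentzian hh'.isLorentzian hdet hdets hδ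
      (not_forall.1 h4) (not_forall.1 (h4iff.not.1 h4))
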